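/- arXiv:2402.06765 — 2 statements merged into one kernel-verified Lean document; each statement's English description precedes it below -/
import Mathlib

section
/- The function ŵ : ΔΘ → ℝ is lower semicontinuous and concave (concave meaning ŵ(λμ + (1−λ)μ') ≥ λŵ(μ) + (1−λ)ŵ(μ') for all μ, μ' ∈ ΔΘ and λ ∈ [0,1]), and for every p̄ ∈ I(μ0) one has ŵ(μ0) ≥ ∫ ŵ dp̄. -/
open MeasureTheory


/-- The Borel σ-algebra on the space of probability measures (the σ-algebra generated by
evaluation maps, i.e. the subspace σ-algebra of the Giry σ-algebra; for metrizable spaces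
this is the Borel σ-algebra of the weak* topology). -/
instance probMeasurableSpace {Ω : Type*} [MeasurableSpace Ω] :
    MeasurableSpace (ProbabilityMeasure Ω) :=
  MeasurableSpace.comap (fun μ => (μ : Measure Ω)) inferInstance

/-- Sender's expected utility from action `a` at belief `μ`. -/
noncomputable def senderEU {A Θ : Type*} [MeasurableSpace Θ]
    (uS : A → Θ → ℝ) (μ : ProbabilityMeasure Θ) (a : A) : ℝ :=
  ∫ θ, uS a θ ∂(μ : Measure Θ)

/-- The receiver's best responses `A*_R(μ)` at belief `μ`. -/
def bestResponses {A Θ : Type*} [MeasurableSpace Θ]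
    (uR : A → Θ → ℝ) (μ : ProbabilityMeasure Θ) : Set A :=
  {a | ∀ a' : A, ∫ θ, uR a' θ ∂(μ : Measure Θ) ≤ ∫ θ, uR a θ ∂(μ : Measure Θ)}

/-- The sender's upper value function `v`. -/
noncomputable def vFun {A Θ : Type*} [MeasurableSpace Θ]
    (uS uR : A → Θ → ℝ) (μ : ProbabilityMeasure Θ) : ℝ :=
  sSup (senderEU uS μ '' bestResponses uR μ)

/-- The sender's lower value function `w`. -/
noncomputable def wFun {A Θ : Type*} [MeasurableSpace Θ]
    (uS uR : A → Θ → ℝ) (μ : ProbabilityMeasure Θ) : ℝ :=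
  sInf (senderEU uS μ '' bestResponses uR μ)

/-- The set `I(μ0)` of information policies: distributions over posteriors with
barycenter equal to the prior `μ0`. -/
def infoPolicies {Θ : Type*} [MeasurableSpace Θ] (μ0 : ProbabilityMeasure Θ) :
    Set (ProbabilityMeasure (ProbabilityMeasure Θ)) :=
  {p | ∀ B : Set Θ, MeasurableSet B →
    ∫ ν, ((ν : Measure Θ) B).toReal ∂(p : Measure (ProbabilityMeasure Θ))
      = ((μ0 : Measure Θ) B).toReal}

/-- `v̂(μ0)`: the sender's best equilibrium (Bayesian persuasion) value. -/
noncomputable def vHat {A Θ : Type*} [MeasurableSpace Θ]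
    (uS uR : A → Θ → ℝ) (μ0 : ProbabilityMeasure Θ) : ℝ :=
  sSup ((fun p : ProbabilityMeasure (ProbabilityMeasure Θ) =>
    ∫ ν, vFun uS uR ν ∂(p : Measure (ProbabilityMeasure Θ))) '' infoPolicies μ0)

/-- `ŵ(μ0)`: the sender's worst equilibrium value. -/
noncomputable def wHat {A Θ : Type*} [MeasurableSpace Θ]
    (uS uR : A → Θ → ℝ) (μ0 : ProbabilityMeasure Θ) : ℝ :=
  sSup ((fun p : ProbabilityMeasure (ProbabilityMeasure Θ) =>
    ∫ ν, wFun uS uR ν ∂(p : Measure (ProbabilityMeasure Θ))) '' infoPolicies μ0)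

section Helpers
set_option linter.unusedSectionVars false
open Filter Topology ENNReal NNReal BoundedContinuousFunction

variable {Θ : Type*} [TopologicalSpace Θ] [CompactSpace Θ] [TopologicalSpace.MetrizableSpace Θ]
  [MeasurableSpace Θ] [BorelSpace Θ]

lemma integrable_cont (μ : Measure Θ) [IsFiniteMeasure μ] {f : Θ → ℝ} (hf : Continuous f) :
    Integrable f μ :=
  (BoundedContinuousFunction.mkOfCompact ⟨f, hf⟩).integrable μ

lemma integral_sub_le_norm (μ : ProbabilityMeasure Θ) (f g : C(Θ, ℝ)) :
    |∫ θ, f θ ∂(μ : Measure Θ) - ∫ θ, g θ ∂(μ : Measure Θ)| ≤ ‖f - g‖ := by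
  rw [← integral_sub (integrable_cont _ f.continuous) (integrable_cont _ g.continuous)]
  have := norm_integral_le_of_norm_le_const (μ := (μ : Measure Θ)) (f := fun θ => f θ - g θ)
    (C := ‖f - g‖) (Eventually.of_forall fun θ => (f - g).norm_coe_le_norm θ)
  simpa using this

lemma tendsto_integral_of_dense {D : Set C(Θ, ℝ)} (hD : Dense D) {γ : Type*} {F : Filter γ}
    {ν : γ → ProbabilityMeasure Θ} {μ : ProbabilityMeasure Θ}
    (h : ∀ g ∈ D, Tendsto (fun k => ∫ θ, g θ ∂(ν k : Measure Θ)) F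
      (𝓝 (∫ θ, g θ ∂(μ : Measure Θ)))) : Tendsto ν F (𝓝 μ) := by
  rw [ProbabilityMeasure.tendsto_iff_forall_integral_tendsto]
  intro f
  rw [Metric.tendsto_nhds]
  intro ε hε
  obtain ⟨g, hgD, hg⟩ := Metric.dense_iff.1 hD f.toContinuousMap (ε / 3) (by positivity)
  have := (Metric.tendsto_nhds.1 (h g hg)) (ε / 3) (by positivity)
  filter_upwards [this] with k hk
  have h1 := integral_sub_le_norm (ν k) f.toContinuousMap g
  have h2 := integral_sub_le_norm μ f.toContinuousMap g
  have h3 : ‖f.toContinuousMap - g‖ < ε / 3 := by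
    rw [← dist_eq_norm, dist_comm]; exact hgD
  rw [Real.dist_eq] at hk ⊢
  simp only [BoundedContinuousFunction.coe_toContinuousMap] at h1 h2
  rw [abs_lt] at hk ⊢
  rw [abs_le] at h1 h2
  constructor <;> linarith [hk.1, hk.2, h1.1, h1.2, h2.1, h2.2]

lemma continuous_integral_pair :
    Continuous fun q : C(Θ, ℝ) × ProbabilityMeasure Θ => ∫ θ, q.1 θ ∂(q.2 : Measure Θ) := by
  rw [continuous_iff_continuousAt]
  rintro ⟨f, μ⟩
  rw [ContinuousAt, Metric.tendsto_nhds]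
  intro ε hε
  have c1 : Tendsto (fun q : C(Θ, ℝ) × ProbabilityMeasure Θ => ∫ θ, f θ ∂(q.2 : Measure Θ))
      (𝓝 (f, μ)) (𝓝 (∫ θ, f θ ∂(μ : Measure Θ))) :=
    ((ProbabilityMeasure.continuous_integral_continuousMap f).comp continuous_snd).tendsto (f, μ)
  have c2 : Tendsto (fun q : C(Θ, ℝ) × ProbabilityMeasure Θ => q.1) (𝓝 (f, μ)) (𝓝 f) :=
    continuous_fst.tendsto (f, μ)
  filter_upwards [Metric.tendsto_nhds.1 c1 (ε / 2) (by positivity),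
    Metric.tendsto_nhds.1 c2 (ε / 2) (by positivity)] with q h1 h2
  have h3 := integral_sub_le_norm q.2 q.1 f
  rw [← dist_eq_norm] at h3
  rw [Real.dist_eq] at h1 ⊢
  rw [abs_lt] at h1 ⊢
  rw [abs_le] at h3
  constructor <;> linarith [h1.1, h1.2, h3.1, h3.2]

/-- The identity kernel from probability measures. -/
noncomputable def idK (Θ : Type*) [MeasurableSpace Θ] :
    ProbabilityTheory.Kernel (ProbabilityMeasure Θ) Θ where
  toFun ν := (ν : Measure Θ)
  measurable' := comap_measurable _

instance : ProbabilityTheory.IsMarkovKernel (idK Θ) :=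
  ⟨fun ν => inferInstanceAs (IsProbabilityMeasure (ν : Measure Θ))⟩

lemma measurable_integral_cont (g : C(Θ, ℝ)) :
    Measurable fun ν : ProbabilityMeasure Θ => ∫ θ, g θ ∂(ν : Measure Θ) :=
  (StronglyMeasurable.integral_kernel (κ := idK Θ)
    (f := fun θ => g θ) g.continuous.stronglyMeasurable).measurable

instance opensMeasPM : OpensMeasurableSpace (ProbabilityMeasure Θ) := by
  constructor
  obtain ⟨D, hDc, hD⟩ := TopologicalSpace.exists_countable_dense C(Θ, ℝ)
  have : Countable D := hDc
  let E : ProbabilityMeasure Θ → (D → ℝ) := fun ν g => ∫ θ, g.1 θ ∂(ν : Measure Θ)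
  have hE : Measurable E := measurable_pi_lambda _ fun g => measurable_integral_cont g.1
  have hEc : Continuous E := continuous_pi fun g =>
    ProbabilityMeasure.continuous_integral_continuousMap g.1
  have hI : IsInducing E := by
    rw [isInducing_iff_nhds]
    intro x
    apply le_antisymm
    · exact hEc.continuousAt.le_comap
    · have : Tendsto (id : ProbabilityMeasure Θ → _) (comap E (𝓝 (E x))) (𝓝 x) := by
        refine tendsto_integral_of_dense hD fun g hg => ?_
        have h1 : Tendsto E (comap E (𝓝 (E x))) (𝓝 (E x)) := tendsto_comap
        exact (tendsto_pi_nhds.1 h1) ⟨g, hg⟩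
      exact this
  refine MeasurableSpace.generateFrom_le ?_
  intro s hs
  obtain ⟨t, ht, rfl⟩ := hI.isOpen_iff.1 hs
  exact hE ht.measurableSet

/-- homogeneous extension -/
noncomputable def hom [Nonempty Θ] (F : ProbabilityMeasure Θ → ℝ≥0∞) (m : FiniteMeasure Θ) : ℝ≥0∞ :=
  m.mass * F m.normalize

lemma hom_lsc [Nonempty Θ] {F : ProbabilityMeasure Θ → ℝ≥0∞} (hF : LowerSemicontinuous F) :
    LowerSemicontinuous (hom F) := by
  intro m
  by_cases hm : m = 0
  · intro y hy
    simp [hom, hm] at hy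
  · change LowerSemicontinuousAt (hom F) m
    rw [lowerSemicontinuousAt_iff_le_liminf]
    have h1 : Tendsto (fun m : FiniteMeasure Θ => m.normalize) (𝓝 m) (𝓝 m.normalize) :=
      FiniteMeasure.tendsto_normalize_of_tendsto tendsto_id hm
    have h2 : Tendsto (fun m : FiniteMeasure Θ => (m.mass : ℝ≥0∞)) (𝓝 m) (𝓝 m.mass) :=
      (ENNReal.continuous_coe.comp FiniteMeasure.continuous_mass).tendsto m
    have h3 : F m.normalize ≤ liminf (fun m : FiniteMeasure Θ => F m.normalize) (𝓝 m) :=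
      ((lowerSemicontinuousAt_iff_le_liminf.1 (hF m.normalize))).trans
        (h1.liminf_le_liminf_comp)
    calc hom F m = m.mass * F m.normalize := rfl
      _ ≤ liminf (fun m : FiniteMeasure Θ => (m.mass : ℝ≥0∞)) (𝓝 m) *
          liminf (fun m : FiniteMeasure Θ => F m.normalize) (𝓝 m) := by
            rw [h2.liminf_eq]; gcongr
      _ ≤ _ := ENNReal.le_liminf_mul

lemma mem_infoPolicies_iff {μ : ProbabilityMeasure Θ}
    {p : ProbabilityMeasure (ProbabilityMeasure Θ)} :
    p ∈ infoPolicies μ ↔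
      Measure.bind (p : Measure (ProbabilityMeasure Θ)) (idK Θ) = (μ : Measure Θ) := by
  have key : ∀ B : Set Θ, MeasurableSet B →
      ∫ ν : ProbabilityMeasure Θ, ((ν : Measure Θ) B).toReal
        ∂(p : Measure (ProbabilityMeasure Θ))
      = (Measure.bind (p : Measure (ProbabilityMeasure Θ)) (idK Θ) B).toReal := by
    intro B hB
    rw [Measure.bind_apply hB (ProbabilityTheory.Kernel.aemeasurable _)]
    rw [← integral_toReal]
    · rfl
    · exact ((idK Θ).measurable_coe hB).aemeasurable
    · exact Eventually.of_forall fun ν => measure_lt_top _ _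
  have : IsFiniteMeasure (Measure.bind (p : Measure (ProbabilityMeasure Θ)) (idK Θ)) :=
    inferInstance
  constructor
  · intro h
    ext B hB
    have := h B hB
    rw [key B hB] at this
    exact (ENNReal.toReal_eq_toReal_iff' (measure_ne_top _ _) (measure_ne_top _ _)).1 this
  · intro h B hB
    rw [key B hB, h]

/-- The ENNReal-valued version of the concavification. -/
noncomputable def WH (W : ProbabilityMeasure Θ → ℝ≥0∞) (μ : ProbabilityMeasure Θ) : ℝ≥0∞ :=
  ⨆ p ∈ infoPolicies μ, ∫⁻ ν, W ν ∂(p : Measure (ProbabilityMeasure Θ))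

lemma infoPolicies_nonempty (μ : ProbabilityMeasure Θ) :
    ∃ p : ProbabilityMeasure (ProbabilityMeasure Θ), p ∈ infoPolicies μ := by
  refine ⟨⟨Measure.dirac μ, inferInstance⟩, mem_infoPolicies_iff.2 ?_⟩
  exact Measure.dirac_bind (ProbabilityTheory.Kernel.measurable _) μ

lemma WH_approx {W : ProbabilityMeasure Θ → ℝ≥0∞} (μ : ProbabilityMeasure Θ)
    (hfin : WH W μ ≠ ∞) {ε : ℝ≥0∞} (hε : ε ≠ 0) :
    ∃ p ∈ infoPolicies μ, WH W μ ≤ ∫⁻ ν, W ν ∂(p : Measure (ProbabilityMeasure Θ)) + ε := by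
  by_cases h0 : WH W μ = 0
  · obtain ⟨p, hp⟩ := infoPolicies_nonempty μ
    exact ⟨p, hp, by simp [h0]⟩
  · have h1 : WH W μ - ε < WH W μ := ENNReal.sub_lt_self hfin h0 hε
    conv_rhs at h1 => rw [WH]
    simp only [lt_iSup_iff] at h1
    obtain ⟨p, hp, h⟩ := h1
    exact ⟨p, hp, tsub_le_iff_right.1 h.le⟩

lemma WH_concave [Nonempty Θ] {W : ProbabilityMeasure Θ → ℝ≥0∞} (hfin : ∀ μ, WH W μ ≠ ∞)
    (μ : ProbabilityMeasure Θ) {ι : Type} [Fintype ι] (m : ι → FiniteMeasure Θ)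
    (hm : ∑ i, m i = μ.toFiniteMeasure) : ∑ i, hom (WH W) (m i) ≤ WH W μ := by
  refine ENNReal.le_of_forall_pos_le_add fun ε hε _ => ?_
  have hε' : (ε : ℝ≥0∞) ≠ 0 := by simpa using hε.ne'
  choose p hp hle using fun i => WH_approx (W := W) (m i).normalize (hfin _) hε'
  let P : Measure (ProbabilityMeasure Θ) :=
    Measure.sum fun i => (m i).mass • (p i : Measure (ProbabilityMeasure Θ))
  have hmass : ∑ i, ((m i).mass : ℝ≥0∞) = 1 := by
    have h1 := congrArg (fun x : FiniteMeasure Θ => (x : Measure Θ) Set.univ) hm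
    simp only [FiniteMeasure.toMeasure_sum, Measure.finsetSum_apply] at h1
    simpa [FiniteMeasure.ennreal_mass] using h1
  have hP : IsProbabilityMeasure P := by
    constructor
    simp only [P, Measure.sum_apply _ MeasurableSet.univ, tsum_fintype]
    simpa using hmass
  have hPI : (⟨P, hP⟩ : ProbabilityMeasure (ProbabilityMeasure Θ)) ∈ infoPolicies μ := by
    refine mem_infoPolicies_iff.2 ?_
    simp only [ProbabilityMeasure.coe_mk, P]
    rw [Measure.bind_sum _ _ (ProbabilityTheory.Kernel.aemeasurable _)]
    have h1 := congrArg (fun x : FiniteMeasure Θ => (x : Measure Θ)) hm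
    simp only [FiniteMeasure.toMeasure_sum] at h1
    rw [ProbabilityMeasure.toMeasure_comp_toFiniteMeasure_eq_toMeasure] at h1
    rw [← h1, Measure.sum_fintype]
    refine Finset.sum_congr rfl fun i _ => ?_
    rw [Measure.bind_smul, mem_infoPolicies_iff.1 (hp i)]
    have := congrArg (fun x : FiniteMeasure Θ => (x : Measure Θ)) (m i).self_eq_mass_smul_normalize
    simpa using this.symm
  calc ∑ i, hom (WH W) (m i)
      ≤ ∑ i, ((m i).mass : ℝ≥0∞) *
          (∫⁻ ν, W ν ∂(p i : Measure (ProbabilityMeasure Θ)) + ε) := by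
        refine Finset.sum_le_sum fun i _ => ?_
        unfold hom
        gcongr
        exact hle i
    _ = ∫⁻ ν, W ν ∂P + ε := by
        simp only [mul_add, Finset.sum_add_distrib, ← Finset.sum_mul, hmass, one_mul]
        congr 1
        simp only [P, lintegral_sum_measure, tsum_fintype]
        refine Finset.sum_congr rfl fun i _ => ?_
        exact (lintegral_smul_measure (R := ℝ≥0) _ _).symm
    _ ≤ WH W μ + ε := by
        gcongr
        exact le_iSup₂_of_le (⟨P, hP⟩ : ProbabilityMeasure (ProbabilityMeasure Θ)) hPI le_rfl

section Cell
variable {ι : Type} [Fintype ι] [MeasurableSpace ι] [MeasurableSingletonClass ι]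

/-- The (unnormalised) barycenter of a cell. -/
noncomputable def cellBar (p : ProbabilityMeasure (ProbabilityMeasure Θ))
    (c : ProbabilityMeasure Θ → ι) (i : ι) : FiniteMeasure Θ :=
  ⟨Measure.bind ((p : Measure (ProbabilityMeasure Θ)).restrict (c ⁻¹' {i})) (idK Θ), inferInstance⟩

lemma cellBar_mass (p : ProbabilityMeasure (ProbabilityMeasure Θ))
    (c : ProbabilityMeasure Θ → ι) (i : ι) :
    ((cellBar p c i).mass : ℝ≥0∞) = (p : Measure (ProbabilityMeasure Θ)) (c ⁻¹' {i}) := by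
  rw [FiniteMeasure.ennreal_mass]
  simp only [cellBar, FiniteMeasure.toMeasure_mk]
  rw [Measure.bind_apply MeasurableSet.univ (ProbabilityTheory.Kernel.aemeasurable _)]
  simp

lemma restrict_cells (p : ProbabilityMeasure (ProbabilityMeasure Θ))
    {c : ProbabilityMeasure Θ → ι} (hc : Measurable c) :
    Measure.sum (fun i => (p : Measure (ProbabilityMeasure Θ)).restrict (c ⁻¹' {i})) = p := by
  rw [← Measure.restrict_iUnion]
  · rw [← Set.preimage_iUnion, Set.iUnion_of_singleton, Set.preimage_univ, Measure.restrict_univ]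
  · intro i j hij
    exact Disjoint.preimage _ (by simpa using hij)
  · exact fun i => hc (measurableSet_singleton i)

lemma cellBar_sum {μ : ProbabilityMeasure Θ} {p : ProbabilityMeasure (ProbabilityMeasure Θ)}
    (hp : p ∈ infoPolicies μ)
    {c : ProbabilityMeasure Θ → ι} (hc : Measurable c) :
    ∑ i, cellBar p c i = μ.toFiniteMeasure := by
  apply FiniteMeasure.toMeasure_injective
  rw [FiniteMeasure.toMeasure_sum, ProbabilityMeasure.toMeasure_comp_toFiniteMeasure_eq_toMeasure,
    ← mem_infoPolicies_iff.1 hp]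
  conv_rhs => rw [← restrict_cells p hc]
  rw [Measure.bind_sum _ _ (ProbabilityTheory.Kernel.aemeasurable _), Measure.sum_fintype]
  rfl

lemma cellBar_lintegral [Nonempty Θ] (F : ProbabilityMeasure Θ → ℝ≥0∞)
    (p : ProbabilityMeasure (ProbabilityMeasure Θ))
    {c : ProbabilityMeasure Θ → ι} (hc : Measurable c) :
    ∫⁻ ν, F (cellBar p c (c ν)).normalize ∂(p : Measure (ProbabilityMeasure Θ))
      = ∑ i, hom F (cellBar p c i) := by
  conv_lhs => rw [← restrict_cells p hc]
  rw [lintegral_sum_measure, tsum_fintype]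
  refine Finset.sum_congr rfl fun i _ => ?_
  rw [setLIntegral_congr_fun (g := fun _ => F (cellBar p c i).normalize)
    (hc (measurableSet_singleton i)) (by rintro ν rfl; rfl)]
  rw [setLIntegral_const, hom, cellBar_mass, mul_comm]

lemma cellBar_close [Nonempty Θ] (p : ProbabilityMeasure (ProbabilityMeasure Θ))
    {c : ProbabilityMeasure Θ → ι} (hc : Measurable c) (f : C(Θ, ℝ)) {δ : ℝ}
    (ν : ProbabilityMeasure Θ)
    (h : ∀ ν' : ProbabilityMeasure Θ, c ν' = c ν →
      |∫ θ, f θ ∂(ν' : Measure Θ) - ∫ θ, f θ ∂(ν : Measure Θ)| ≤ δ)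
    (hν : (p : Measure (ProbabilityMeasure Θ)) (c ⁻¹' {c ν}) ≠ 0) :
    |∫ θ, f θ ∂((cellBar p c (c ν)).normalize : Measure Θ) - ∫ θ, f θ ∂(ν : Measure Θ)| ≤ δ := by
  set C := c ⁻¹' {c ν} with hC
  have hCm : MeasurableSet C := hc (measurableSet_singleton _)
  set b := cellBar p c (c ν) with hb
  set x := ∫ θ, f θ ∂(ν : Measure Θ) with hx
  have hmass : (b.mass : ℝ≥0∞) = (p : Measure (ProbabilityMeasure Θ)) C := cellBar_mass p c (c ν)
  have hb0 : b ≠ 0 := by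
    rw [← FiniteMeasure.mass_nonzero_iff]
    intro h0
    rw [h0] at hmass
    exact hν (by simpa using hmass.symm)
  have hbpos : 0 < (b.mass : ℝ) := by
    have := FiniteMeasure.mass_nonzero_iff b |>.2 hb0
    exact_mod_cast pos_iff_ne_zero.2 this
  have hreal : (b.mass : ℝ) = (p : Measure (ProbabilityMeasure Θ)).real C := by
    rw [Measure.real, ← hmass]; rfl
  have hint : ∫ θ, f θ ∂(b : Measure Θ) =
      ∫ ν' in C, (∫ θ, f θ ∂((ν' : ProbabilityMeasure Θ) : Measure Θ))
        ∂(p : Measure (ProbabilityMeasure Θ)) := by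
    have := ProbabilityTheory.Kernel.integral_comp (η := idK Θ)
      (κ := ProbabilityTheory.Kernel.const Unit
        ((p : Measure (ProbabilityMeasure Θ)).restrict C)) (a := ()) (f := fun θ => f θ)
      (integrable_cont _ f.continuous)
    rw [ProbabilityTheory.Kernel.comp_apply, ProbabilityTheory.Kernel.const_apply] at this
    exact this
  have hI : IntegrableOn (fun ν' : ProbabilityMeasure Θ => ∫ θ, f θ ∂(ν' : Measure Θ)) C
      (p : Measure (ProbabilityMeasure Θ)) := by
    refine Integrable.of_bound (measurable_integral_cont f).aestronglyMeasurable (|x| + δ) ?_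
    refine (ae_restrict_mem hCm).mono fun ν' hν' => ?_
    have := h ν' hν'
    rw [Real.norm_eq_abs]
    have h2 := abs_sub_abs_le_abs_sub (∫ θ, f θ ∂(ν' : Measure Θ)) x
    linarith
  have hdiff : |∫ θ, f θ ∂(b : Measure Θ) - b.mass * x| ≤ δ * b.mass := by
    have h1 : ∫ θ, f θ ∂(b : Measure Θ) - b.mass * x =
        ∫ ν' in C, ((∫ θ, f θ ∂((ν' : ProbabilityMeasure Θ) : Measure Θ)) - x)
        ∂(p : Measure (ProbabilityMeasure Θ)) := by
      rw [integral_sub hI (integrable_const _), hint, setIntegral_const, hreal, smul_eq_mul]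
    rw [h1, hreal]
    exact norm_setIntegral_le_of_norm_le_const
      (f := fun ν' : ProbabilityMeasure Θ => (∫ θ, f θ ∂(ν' : Measure Θ)) - x)
      (measure_lt_top _ _) (fun ν' hν' => h ν' hν')
  rw [b.toMeasure_normalize_eq_of_nonzero hb0]
  have h3 : ∫ θ, f θ ∂(b.mass⁻¹ • (b : Measure Θ)) = (b.mass : ℝ)⁻¹ * ∫ θ, f θ ∂(b : Measure Θ) := by
    rw [integral_smul_nnreal_measure]; rfl
  rw [h3]
  have h4 : (b.mass : ℝ)⁻¹ * ∫ θ, f θ ∂(b : Measure Θ) - x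
      = (b.mass : ℝ)⁻¹ * (∫ θ, f θ ∂(b : Measure Θ) - b.mass * x) := by
    field_simp
  rw [h4, abs_mul, abs_of_pos (inv_pos.2 hbpos), inv_mul_le_iff₀ hbpos]
  linarith [hdiff]

lemma ae_cell_ne_zero (p : ProbabilityMeasure (ProbabilityMeasure Θ))
    {c : ProbabilityMeasure Θ → ι} :
    ∀ᵐ ν ∂(p : Measure (ProbabilityMeasure Θ)),
      (p : Measure (ProbabilityMeasure Θ)) (c ⁻¹' {c ν}) ≠ 0 := by
  rw [ae_iff]
  refine measure_mono_null (t := ⋃ i ∈ {i : ι | (p : Measure (ProbabilityMeasure Θ)) (c ⁻¹' {i}) = 0},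
    c ⁻¹' {i}) ?_ ?_
  · intro ν hν
    simp only [Set.mem_ofPred_eq, not_not] at hν
    simp only [Set.mem_iUnion]
    exact ⟨c ν, hν, rfl⟩
  · rw [measure_biUnion_null_iff (Set.to_countable _)]
    exact fun i hi => hi
end Cell

/-- A finite measurable partition making finitely many tests nearly constant. -/
lemma exists_partition (g : ℕ → C(Θ, ℝ)) (k : ℕ) :
    ∃ (ι : Type) (_ : Fintype ι) (_ : MeasurableSpace ι) (_ : MeasurableSingletonClass ι)
      (c : ProbabilityMeasure Θ → ι), Measurable c ∧
      ∀ ν ν' : ProbabilityMeasure Θ, c ν' = c ν → ∀ i < k,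
        |∫ θ, g i θ ∂(ν' : Measure Θ) - ∫ θ, g i θ ∂(ν : Measure Θ)| ≤ 1 / ((k : ℝ) + 1) := by
  let c0 : ProbabilityMeasure Θ → (Fin k → ℤ) := fun ν i =>
    ⌊((k : ℝ) + 1) * ∫ θ, g i θ ∂(ν : Measure Θ)⌋
  have hk : (0 : ℝ) < (k : ℝ) + 1 := by positivity
  have hc0 : Measurable c0 := measurable_pi_lambda _ fun i =>
    ((measurable_integral_cont (g i)).const_mul _).floor
  have hfin : (Set.range c0).Finite := by
    refine (Set.Finite.pi' (t := fun i : Fin k => Set.Icc ⌊((k : ℝ) + 1) * (-‖g i‖)⌋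
      ⌊((k : ℝ) + 1) * ‖g i‖⌋) fun i => Set.finite_Icc _ _).subset ?_
    rintro _ ⟨ν, rfl⟩ i
    have := integral_sub_le_norm ν (g i) 0
    simp only [ContinuousMap.zero_apply, integral_zero, sub_zero] at this
    rw [abs_le] at this
    constructor
    · exact Int.floor_le_floor (mul_le_mul_of_nonneg_left this.1 hk.le)
    · exact Int.floor_le_floor (mul_le_mul_of_nonneg_left this.2 hk.le)
  refine ⟨Set.range c0, hfin.fintype, inferInstance, inferInstance,
    Set.rangeFactorization c0, hc0.subtype_mk, ?_⟩
  intro ν ν' h i hi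
  have h1 : c0 ν' = c0 ν := congrArg Subtype.val h
  have h2 : c0 ν' ⟨i, hi⟩ = c0 ν ⟨i, hi⟩ := by rw [h1]
  have h3 := Int.abs_sub_lt_one_of_floor_eq_floor h2
  rw [← mul_sub, abs_mul, abs_of_pos hk] at h3
  rw [le_div_iff₀ hk]
  linarith

lemma cell [Nonempty Θ] {F : ProbabilityMeasure Θ → ℝ≥0∞} (hF : LowerSemicontinuous F)
    {μ : ProbabilityMeasure Θ} {p : ProbabilityMeasure (ProbabilityMeasure Θ)}
    (hp : p ∈ infoPolicies μ) (G : ℝ≥0∞)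
    (hG : ∀ (ι : Type) [Fintype ι] (m : ι → FiniteMeasure Θ), ∑ i, m i = μ.toFiniteMeasure →
      ∑ i, hom F (m i) ≤ G) :
    ∫⁻ ν, F ν ∂(p : Measure (ProbabilityMeasure Θ)) ≤ G := by
  have hd := TopologicalSpace.denseRange_denseSeq C(Θ, ℝ)
  set g := TopologicalSpace.denseSeq C(Θ, ℝ)
  choose ι i1 i2 i3 c hc hclose using exists_partition (Θ := Θ) g
  have hconv : ∀ᵐ ν ∂(p : Measure (ProbabilityMeasure Θ)),
      Tendsto (fun k => (cellBar p (c k) (c k ν)).normalize) atTop (𝓝 ν) := by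
    have hae : ∀ᵐ ν ∂(p : Measure (ProbabilityMeasure Θ)), ∀ k,
      (p : Measure (ProbabilityMeasure Θ)) (c k ⁻¹' {c k ν}) ≠ 0 :=
        ae_all_iff.2 fun k => ae_cell_ne_zero p
    filter_upwards [hae] with ν hν
    refine tendsto_integral_of_dense hd ?_
    rintro _ ⟨i, rfl⟩
    rw [tendsto_iff_dist_tendsto_zero]
    refine squeeze_zero' (Eventually.of_forall fun _ => dist_nonneg) ?_
      tendsto_one_div_add_atTop_nhds_zero_nat
    filter_upwards [eventually_gt_atTop i] with k hk
    rw [Real.dist_eq]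
    exact cellBar_close p (hc k) (g i) ν (fun ν' h => hclose k ν ν' h i hk) (hν k)
  calc ∫⁻ ν, F ν ∂(p : Measure (ProbabilityMeasure Θ))
      ≤ ∫⁻ ν, liminf (fun k => F (cellBar p (c k) (c k ν)).normalize) atTop
          ∂(p : Measure (ProbabilityMeasure Θ)) := by
        refine lintegral_mono_ae ?_
        filter_upwards [hconv] with ν hν
        exact (lowerSemicontinuousAt_iff_le_liminf.1 (hF ν)).trans hν.liminf_le_liminf_comp
    _ ≤ liminf (fun k => ∫⁻ ν, F (cellBar p (c k) (c k ν)).normalize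
          ∂(p : Measure (ProbabilityMeasure Θ))) atTop := by
        refine lintegral_liminf_le fun k => ?_
        exact (measurable_of_countable
          (fun i => F (cellBar p (c k) i).normalize)).comp (hc k)
    _ ≤ liminf (fun _ : ℕ => G) atTop := by
        refine liminf_le_liminf (Eventually.of_forall fun k => ?_)
        rw [cellBar_lintegral F p (hc k)]
        exact hG _ _ (cellBar_sum hp (hc k))
    _ = G := by simp

lemma W_le_WH {W : ProbabilityMeasure Θ → ℝ≥0∞} (hW : Measurable W) (μ : ProbabilityMeasure Θ) :
    W μ ≤ WH W μ := by
  have hI : (⟨Measure.dirac μ, inferInstance⟩ : ProbabilityMeasure (ProbabilityMeasure Θ)) ∈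
      infoPolicies μ :=
    mem_infoPolicies_iff.2 (Measure.dirac_bind (ProbabilityTheory.Kernel.measurable _) μ)
  refine le_trans ?_ (le_iSup₂_of_le _ hI le_rfl)
  exact (lintegral_dirac' μ hW).symm.le

/-- The finite measure with continuous density. -/
noncomputable def dens (φ : C(Θ, ℝ≥0)) (μ : ProbabilityMeasure Θ) : FiniteMeasure Θ :=
  ⟨(μ : Measure Θ).withDensity (fun θ => (φ θ : ℝ≥0∞)), by
    refine isFiniteMeasure_withDensity ?_
    exact ((BoundedContinuousFunction.mkOfCompact φ).lintegral_lt_top_of_nnreal (μ : Measure Θ)).ne⟩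

lemma dens_integral (φ : C(Θ, ℝ≥0)) (μ : ProbabilityMeasure Θ) (f : Θ → ℝ) :
    ∫ θ, f θ ∂(dens φ μ : Measure Θ) = ∫ θ, (φ θ : ℝ) * f θ ∂(μ : Measure Θ) :=
  integral_withDensity_eq_integral_smul φ.continuous.measurable f

lemma dens_continuous (φ : C(Θ, ℝ≥0)) : Continuous (dens φ) := by
  rw [FiniteMeasure.continuous_iff_forall_continuousMap_continuous_integral]
  intro f
  simp only [dens_integral]
  exact ProbabilityMeasure.continuous_integral_continuousMap
    (⟨fun θ => (φ θ : ℝ) * f θ, by fun_prop⟩ : C(Θ, ℝ))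

lemma sum_dens_le_WH [Nonempty Θ] {W : ProbabilityMeasure Θ → ℝ≥0∞} (hW : Measurable W)
    (hfin : ∀ μ, WH W μ ≠ ∞) (μ : ProbabilityMeasure Θ) {ι : Type} [Fintype ι]
    (φ : ι → C(Θ, ℝ≥0)) (hφ : ∀ θ, ∑ i, φ i θ ≤ 1) :
    ∑ i, hom W (dens (φ i) μ) ≤ WH W μ := by
  let r : C(Θ, ℝ≥0) := ⟨fun θ => 1 - ∑ i, φ i θ, by fun_prop⟩
  let m : Option ι → FiniteMeasure Θ := fun o => o.elim (dens r μ) (fun i => dens (φ i) μ)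
  have hm : ∑ o, m o = μ.toFiniteMeasure := by
    apply FiniteMeasure.toMeasure_injective
    rw [FiniteMeasure.toMeasure_sum,
      ProbabilityMeasure.toMeasure_comp_toFiniteMeasure_eq_toMeasure]
    ext s hs
    rw [Measure.finsetSum_apply, Fintype.sum_option]
    simp only [m, Option.elim, dens, FiniteMeasure.toMeasure_mk, withDensity_apply _ hs]
    rw [← lintegral_finsetSum _ (fun i _ => (φ i).continuous.measurable.coe_nnreal_ennreal),
      ← lintegral_add_left r.continuous.measurable.coe_nnreal_ennreal]
    rw [← setLIntegral_one]
    refine lintegral_congr fun θ => ?_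
    rw [← ENNReal.ofNNReal_finsetSum, ← ENNReal.coe_add]
    simp [r, tsub_add_cancel_of_le (hφ θ)]
  refine le_trans ?_ (WH_concave hfin μ m hm)
  rw [Fintype.sum_option]
  refine le_trans (Finset.sum_le_sum fun i _ => ?_) le_add_self
  simp only [m, Option.elim, hom]
  gcongr
  exact W_le_WH hW _

lemma pointwise_bound {ι : Type} [Fintype ι] (f g h : ι → ℝ) (hf : ∀ i, f i = max (g i) 0)
    (hh : ∀ i, 0 ≤ h i) (hs : ∑ i, h i = 1) (i : ι) :
    |f i / max (∑ j, f j) 1 - h i| ≤ 2 * ∑ j, |h j - g j| := by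
  have hf0 : ∀ j, 0 ≤ f j := fun j => by rw [hf]; exact le_max_right _ _
  have hfh : ∀ j, |f j - h j| ≤ |h j - g j| := by
    intro j
    rw [hf, abs_sub_comm (h j)]
    have := abs_max_sub_max_le_abs (g j) (h j) 0
    rwa [max_eq_left (hh j)] at this
  set M := max (∑ j, f j) 1 with hM
  have hM1 : 1 ≤ M := le_max_right _ _
  have hfM : f i ≤ M := (Finset.single_le_sum (fun j _ => hf0 j) (Finset.mem_univ i)).trans
    (le_max_left _ _)
  have hsum : |∑ j, f j - 1| ≤ ∑ j, |h j - g j| := by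
    rw [← hs, ← Finset.sum_sub_distrib]
    exact (Finset.abs_sum_le_sum_abs _ _).trans (Finset.sum_le_sum fun j _ => hfh j)
  have hMle : M - 1 ≤ |∑ j, f j - 1| := by
    rcases le_total (∑ j, f j) 1 with h1 | h1
    · rw [hM, max_eq_right h1]; simp
    · rw [hM, max_eq_left h1]; exact le_abs_self _
  have hdiv : |f i / M - f i| ≤ M - 1 := by
    have e : f i / M - f i = -(f i / M * (M - 1)) := by field_simp; ring
    rw [e, abs_neg, abs_of_nonneg (mul_nonneg (div_nonneg (hf0 i) (by linarith)) (by linarith))]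
    have : f i / M ≤ 1 := (div_le_one (by linarith)).2 hfM
    nlinarith
  have hi : |f i - h i| ≤ ∑ j, |h j - g j| := (hfh i).trans
    (Finset.single_le_sum (f := fun j => |h j - g j|) (fun j _ => abs_nonneg _) (Finset.mem_univ i))
  calc |f i / M - h i| ≤ |f i / M - f i| + |f i - h i| := abs_sub_le _ _ _
    _ ≤ _ := by linarith

lemma approx_eps {μ : ProbabilityMeasure Θ} {ι : Type} [Fintype ι] (m : ι → FiniteMeasure Θ)
    (hm : ∑ i, m i = μ.toFiniteMeasure) {ε : ℝ} (hε : 0 < ε) :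
    ∃ φ : ι → C(Θ, ℝ≥0), (∀ θ, ∑ i, φ i θ ≤ 1) ∧ ∀ (i : ι) (f : C(Θ, ℝ)),
      |∫ θ, f θ ∂(dens (φ i) μ : Measure Θ) - ∫ θ, f θ ∂(m i : Measure Θ)|
        ≤ ‖f‖ * (2 * (Fintype.card ι * ε)) := by
  have hmeas : ∑ i, (m i : Measure Θ) = (μ : Measure Θ) := by
    rw [← FiniteMeasure.toMeasure_sum, hm]; rfl
  have hac : ∀ i, (m i : Measure Θ) ≪ (μ : Measure Θ) := by
    intro i
    refine Measure.absolutelyContinuous_of_le ?_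
    rw [← hmeas]
    exact Finset.single_le_sum (f := fun i => (m i : Measure Θ)) (fun _ _ => Measure.zero_le _)
      (Finset.mem_univ i)
  let h : ι → Θ → ℝ := fun i θ => ((m i : Measure Θ).rnDeriv (μ : Measure Θ) θ).toReal
  have hint : ∀ i, Integrable (h i) (μ : Measure Θ) := fun i => Measure.integrable_toReal_rnDeriv
  have hsum : ∀ᵐ θ ∂(μ : Measure Θ), ∑ i, h i θ = 1 := by
    have h1 : (fun θ => ∑ i, (m i : Measure Θ).rnDeriv (μ : Measure Θ) θ)
        =ᵐ[(μ : Measure Θ)] fun _ => 1 := by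
      refine ae_eq_of_forall_setLIntegral_eq_of_sigmaFinite
        (Finset.measurable_sum _ fun i _ => Measure.measurable_rnDeriv _ _) measurable_const ?_
      intro s hs _
      rw [lintegral_finsetSum _ fun i _ => Measure.measurable_rnDeriv _ _]
      simp only [Measure.setLIntegral_rnDeriv (hac _), setLIntegral_one]
      rw [← Measure.finsetSum_apply, hmeas]
    have h2 : ∀ᵐ θ ∂(μ : Measure Θ), ∀ i, (m i : Measure Θ).rnDeriv (μ : Measure Θ) θ < ∞ :=
      ae_all_iff.2 fun i => Measure.rnDeriv_lt_top _ _
    filter_upwards [h1, h2] with θ h1 h2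
    simp only [h]
    rw [← ENNReal.toReal_sum fun i _ => (h2 i).ne, h1, ENNReal.toReal_one]
  have hap : ∀ i, ∃ g : Θ →ᵇ ℝ, ∫ θ, |h i θ - g θ| ∂(μ : Measure Θ) ≤ ε := by
    intro i
    obtain ⟨g, hg, -⟩ := Integrable.exists_boundedContinuous_integral_sub_le (hint i) hε
    exact ⟨g, hg⟩
  choose g hg using hap
  let S : C(Θ, ℝ≥0) := ⟨fun θ => max (∑ j, (g j θ).toNNReal) 1, by fun_prop⟩
  have hS : ∀ θ, S θ ≠ 0 := fun θ =>
    (lt_of_lt_of_le one_pos (le_max_right (∑ j, (g j θ).toNNReal) 1)).ne'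
  let φ : ι → C(Θ, ℝ≥0) := fun i => ⟨fun θ => (g i θ).toNNReal / S θ,
    Continuous.div (by fun_prop) S.continuous hS⟩
  refine ⟨φ, ?_, ?_⟩
  · intro θ
    simp only [φ, ContinuousMap.coe_mk]
    rw [← Finset.sum_div]
    exact div_le_one_of_le₀ (le_max_left _ _) zero_le
  · intro i f
    rw [dens_integral, ← integral_rnDeriv_smul (hac i)]
    have hI1 : Integrable (fun θ => (φ i θ : ℝ) * f θ) (μ : Measure Θ) :=
      integrable_cont _ (by fun_prop)
    have hI2 : Integrable (fun θ => h i θ • f θ) (μ : Measure Θ) := by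
      have := (hint i).mul_bdd (c := ‖f‖) (g := fun θ => f θ)
        f.continuous.aestronglyMeasurable (Eventually.of_forall fun θ => f.norm_coe_le_norm θ)
      exact this
    have hI3 : ∀ j, Integrable (fun θ => |h j θ - g j θ|) (μ : Measure Θ) := fun j =>
      ((hint j).sub ((g j).integrable _)).abs
    rw [← integral_sub hI1 hI2]
    calc |∫ θ, ((φ i θ : ℝ) * f θ - h i θ • f θ) ∂(μ : Measure Θ)|
        ≤ ∫ θ, ‖f‖ * (2 * ∑ j, |h j θ - g j θ|) ∂(μ : Measure Θ) := by
          rw [← Real.norm_eq_abs]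
          refine norm_integral_le_of_norm_le
            (((integrable_finsetSum _ fun j _ => hI3 j).const_mul 2).const_mul _) ?_
          filter_upwards [hsum] with θ hθ
          rw [smul_eq_mul, ← sub_mul, norm_mul, mul_comm]
          refine mul_le_mul (f.norm_coe_le_norm θ) ?_ (norm_nonneg _) (norm_nonneg _)
          have := pointwise_bound (fun j => ((g j θ).toNNReal : ℝ)) (fun j => g j θ)
            (fun j => h j θ) (fun j => Real.coe_toNNReal' _) (fun j => ENNReal.toReal_nonneg) hθ i
          rw [Real.norm_eq_abs]
          have e : ((φ i θ : NNReal) : ℝ) = ((g i θ).toNNReal : ℝ) /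
              max (∑ j, ((g j θ).toNNReal : ℝ)) 1 := by
            change (((g i θ).toNNReal / max (∑ j, (g j θ).toNNReal) 1 : NNReal) : ℝ) = _
            push_cast
            rfl
          rw [e]
          exact this
      _ = ‖f‖ * (2 * ∑ j, ∫ θ, |h j θ - g j θ| ∂(μ : Measure Θ)) := by
          rw [integral_const_mul, integral_const_mul, integral_finsetSum _ fun j _ => hI3 j]
      _ ≤ ‖f‖ * (2 * (Fintype.card ι * ε)) := by
          gcongr
          refine (Finset.sum_le_sum fun j _ => hg j).trans ?_
          simp

lemma WH_lsc [Nonempty Θ] {W : ProbabilityMeasure Θ → ℝ≥0∞} (hW : LowerSemicontinuous W)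
    (hfin : ∀ μ, WH W μ ≠ ∞) : LowerSemicontinuous (WH W) := by
  intro μ y hy
  have hy' : y < WH W μ := hy
  rw [WH] at hy'
  simp only [lt_iSup_iff] at hy'
  obtain ⟨p, hp, hyp⟩ := hy'
  obtain ⟨ι, _, m, hm, hlt⟩ : ∃ (ι : Type) (_ : Fintype ι) (m : ι → FiniteMeasure Θ),
      ∑ i, m i = μ.toFiniteMeasure ∧ y < ∑ i, hom W (m i) := by
    by_contra hcon
    push Not at hcon
    exact absurd (cell hW hp y fun ι _ m hm => hcon ι _ m hm) (not_le.2 hyp)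
  have hsl : LowerSemicontinuous fun m : ι → FiniteMeasure Θ => ∑ i, hom W (m i) :=
    lowerSemicontinuous_sum fun i _ => (hom_lsc hW).comp (continuous_apply i)
  choose φ hφ1 hφ2 using fun k : ℕ =>
    approx_eps m hm (ε := 1 / ((k : ℝ) + 1)) (by positivity)
  have ht : Tendsto (fun k => fun i => dens (φ k i) μ) atTop (𝓝 m) := by
    rw [tendsto_pi_nhds]
    intro i
    rw [FiniteMeasure.tendsto_iff_forall_integral_tendsto]
    intro f
    rw [tendsto_iff_dist_tendsto_zero]
    refine squeeze_zero (fun _ => dist_nonneg) (fun k => hφ2 k i f.toContinuousMap) ?_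
    have := (((tendsto_one_div_add_atTop_nhds_zero_nat (𝕜 := ℝ)).const_mul
      (Fintype.card ι : ℝ)).const_mul 2).const_mul ‖f.toContinuousMap‖
    simpa using this
  obtain ⟨k, hk⟩ := (ht.eventually (hsl m y hlt)).exists
  have hcont : Continuous fun μ' : ProbabilityMeasure Θ => fun i => dens (φ k i) μ' :=
    continuous_pi fun i => dens_continuous _
  filter_upwards [hcont.continuousAt.eventually (hsl _ y hk)] with μ' hμ'
  exact lt_of_lt_of_le hμ' (sum_dens_le_WH hW.measurable hfin μ' (φ k) (hφ1 k))

lemma hom_smul [Nonempty Θ] (F : ProbabilityMeasure Θ → ℝ≥0∞) (c : ℝ≥0)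
    (μ : ProbabilityMeasure Θ) : hom F (c • μ.toFiniteMeasure) = c * F μ := by
  have hmass : (c • μ.toFiniteMeasure).mass = c := by
    rw [FiniteMeasure.mass, FiniteMeasure.smul_apply]
    change c • μ.toFiniteMeasure.mass = c
    rw [ProbabilityMeasure.mass_toFiniteMeasure, smul_eq_mul, mul_one]
  rcases eq_or_ne c 0 with rfl | hc
  · simp [hom]
  · rw [hom, hmass]
    congr 2
    apply ProbabilityMeasure.eq_of_forall_apply_eq
    intro s hs
    rw [FiniteMeasure.normalize_eq_of_nonzero _
      (by rw [← FiniteMeasure.mass_nonzero_iff, hmass]; exact hc), hmass,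
      FiniteMeasure.smul_apply, smul_eq_mul, inv_mul_cancel_left₀ hc]
    rfl

variable {A : Type*} [TopologicalSpace A] [CompactSpace A] [TopologicalSpace.MetrizableSpace A]
  [Nonempty A]

lemma continuous_EU {u : A → Θ → ℝ} (hu : Continuous fun p : A × Θ => u p.1 p.2) :
    Continuous fun q : A × ProbabilityMeasure Θ => ∫ θ, u q.1 θ ∂(q.2 : Measure Θ) := by
  let U : C(A, C(Θ, ℝ)) := ContinuousMap.curry ⟨fun p : A × Θ => u p.1 p.2, hu⟩
  exact continuous_integral_pair.comp
    ((U.continuous.comp continuous_fst).prodMk continuous_snd)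

lemma bestResponses_closed {uR : A → Θ → ℝ} (hR : Continuous fun p : A × Θ => uR p.1 p.2) :
    IsClosed {q : A × ProbabilityMeasure Θ | q.1 ∈ bestResponses uR q.2} := by
  have : {q : A × ProbabilityMeasure Θ | q.1 ∈ bestResponses uR q.2} =
      ⋂ a' : A, {q | ∫ θ, uR a' θ ∂(q.2 : Measure Θ) ≤ ∫ θ, uR q.1 θ ∂(q.2 : Measure Θ)} := by
    ext q
    simp [bestResponses]
  rw [this]
  refine isClosed_iInter fun a' => isClosed_le ?_ (continuous_EU hR)
  exact (continuous_EU hR).comp (continuous_const.prodMk continuous_snd)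

lemma wFun_attained {uS uR : A → Θ → ℝ}
    (hS : Continuous fun p : A × Θ => uS p.1 p.2)
    (hR : Continuous fun p : A × Θ => uR p.1 p.2) (μ : ProbabilityMeasure Θ) :
    (∃ a ∈ bestResponses uR μ, senderEU uS μ a = wFun uS uR μ) ∧
      ∀ a ∈ bestResponses uR μ, wFun uS uR μ ≤ senderEU uS μ a := by
  have hcl : IsClosed (bestResponses uR μ) :=
    (bestResponses_closed hR).preimage (continuous_id.prodMk continuous_const)
  have hne : (bestResponses uR μ).Nonempty := by
    have hc : Continuous fun a => ∫ θ, uR a θ ∂(μ : Measure Θ) :=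
      (continuous_EU hR).comp (continuous_id.prodMk continuous_const)
    obtain ⟨a, -, ha⟩ := isCompact_univ.exists_isMaxOn Set.univ_nonempty hc.continuousOn
    exact ⟨a, fun a' => ha (Set.mem_univ a')⟩
  have hcS : Continuous (senderEU uS μ) :=
    (continuous_EU hS).comp (continuous_id.prodMk continuous_const)
  have hcomp : IsCompact (senderEU uS μ '' bestResponses uR μ) := hcl.isCompact.image hcS
  exact ⟨hcomp.sInf_mem (hne.image _), fun a ha =>
    csInf_le hcomp.bddBelow (Set.mem_image_of_mem _ ha)⟩

lemma wFun_lsc {uS uR : A → Θ → ℝ}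
    (hS : Continuous fun p : A × Θ => uS p.1 p.2)
    (hR : Continuous fun p : A × Θ => uR p.1 p.2) : 
    LowerSemicontinuous (wFun uS uR : ProbabilityMeasure Θ → ℝ) := by
  rw [lowerSemicontinuous_iff_isClosed_preimage]
  intro y
  have : wFun uS uR ⁻¹' Set.Iic y = Prod.snd '' ({q : A × ProbabilityMeasure Θ |
      q.1 ∈ bestResponses uR q.2} ∩ {q | ∫ θ, uS q.1 θ ∂(q.2 : Measure Θ) ≤ y}) := by
    ext μ
    constructor
    · intro h
      obtain ⟨a, ha, he⟩ := (wFun_attained hS hR μ).1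
      exact ⟨(a, μ), ⟨ha, he.le.trans h⟩, rfl⟩
    · rintro ⟨⟨a, _⟩, ⟨ha, hy⟩, rfl⟩
      exact ((wFun_attained hS hR _).2 a ha).trans hy
  rw [this]
  exact isClosedMap_snd_of_compactSpace _
    ((bestResponses_closed hR).inter (isClosed_le (continuous_EU hS) continuous_const))

lemma wFun_bound {uS uR : A → Θ → ℝ}
    (hS : Continuous fun p : A × Θ => uS p.1 p.2)
    (hR : Continuous fun p : A × Θ => uR p.1 p.2) :
    ∃ C : ℝ, 0 ≤ C ∧ ∀ μ : ProbabilityMeasure Θ, |wFun uS uR μ| ≤ C := by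
  let f : C(A × Θ, ℝ) := ⟨fun p => uS p.1 p.2, hS⟩
  refine ⟨‖f‖, norm_nonneg _, fun μ => ?_⟩
  obtain ⟨a, -, he⟩ := (wFun_attained hS hR μ).1
  rw [← he, senderEU]
  have := norm_integral_le_of_norm_le_const (μ := (μ : Measure Θ)) (f := fun θ => uS a θ)
    (C := ‖f‖) (Eventually.of_forall fun θ => f.norm_coe_le_norm (a, θ))
  simpa using this

lemma wHat_eq {uS uR : A → Θ → ℝ} {C : ℝ}
    (hw : Measurable (wFun uS uR : ProbabilityMeasure Θ → ℝ))
    (hC : ∀ μ : ProbabilityMeasure Θ, |wFun uS uR μ| ≤ C)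
    (hfin : ∀ μ, WH (fun ν : ProbabilityMeasure Θ => ENNReal.ofReal (wFun uS uR ν + C)) μ ≠ ∞)
    (μ : ProbabilityMeasure Θ) :
    wHat uS uR μ =
      (WH (fun ν : ProbabilityMeasure Θ => ENNReal.ofReal (wFun uS uR ν + C)) μ).toReal - C := by
  set W : ProbabilityMeasure Θ → ℝ≥0∞ := fun ν => ENNReal.ofReal (wFun uS uR ν + C) with hW
  have hint : ∀ p : ProbabilityMeasure (ProbabilityMeasure Θ),
      Integrable (wFun uS uR) (p : Measure (ProbabilityMeasure Θ)) := fun p =>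
    Integrable.of_bound hw.aestronglyMeasurable C (Eventually.of_forall hC)
  have hnn : ∀ ν : ProbabilityMeasure Θ, 0 ≤ wFun uS uR ν + C := fun ν => by
    linarith [(abs_le.1 (hC ν)).1]
  have key : ∀ p : ProbabilityMeasure (ProbabilityMeasure Θ),
      ∫⁻ ν, W ν ∂(p : Measure (ProbabilityMeasure Θ)) =
        ENNReal.ofReal (∫ ν, wFun uS uR ν ∂(p : Measure (ProbabilityMeasure Θ)) + C) := by
    intro p
    have h := ofReal_integral_eq_lintegral_ofReal (f := fun ν => wFun uS uR ν + C)
      (μ := (p : Measure (ProbabilityMeasure Θ))) ((hint p).add (integrable_const C))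
      (Eventually.of_forall hnn)
    change ∫⁻ ν, ENNReal.ofReal (wFun uS uR ν + C) ∂(p : Measure (ProbabilityMeasure Θ)) = _
    rw [← h, integral_add (hint p) (integrable_const C)]
    simp
  have hnn' : ∀ p : ProbabilityMeasure (ProbabilityMeasure Θ),
      0 ≤ ∫ ν, wFun uS uR ν ∂(p : Measure (ProbabilityMeasure Θ)) + C := by
    intro p
    have : 0 ≤ ∫ ν, (wFun uS uR ν + C) ∂(p : Measure (ProbabilityMeasure Θ)) :=
      integral_nonneg hnn
    rw [integral_add (hint p) (integrable_const C)] at this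
    simpa using this
  have hle : ∀ p ∈ infoPolicies μ,
      ∫ ν, wFun uS uR ν ∂(p : Measure (ProbabilityMeasure Θ)) ≤ (WH W μ).toReal - C := by
    intro p hp
    have h1 : ∫⁻ ν, W ν ∂(p : Measure (ProbabilityMeasure Θ)) ≤ WH W μ :=
      le_iSup₂_of_le p hp le_rfl
    rw [key] at h1
    have := (ENNReal.ofReal_le_iff_le_toReal (hfin μ)).1 h1
    linarith
  obtain ⟨p0, hp0⟩ := infoPolicies_nonempty μ
  have hbdd : BddAbove ((fun p : ProbabilityMeasure (ProbabilityMeasure Θ) =>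
    ∫ ν, wFun uS uR ν ∂(p : Measure (ProbabilityMeasure Θ))) '' infoPolicies μ) := by
    refine ⟨(WH W μ).toReal - C, ?_⟩
    rintro _ ⟨p, hp, rfl⟩
    exact hle p hp
  have hsup : ∀ p ∈ infoPolicies μ,
      ∫ ν, wFun uS uR ν ∂(p : Measure (ProbabilityMeasure Θ)) ≤ wHat uS uR μ :=
    fun p hp => le_csSup hbdd ⟨p, hp, rfl⟩
  apply le_antisymm
  · refine csSup_le ⟨_, p0, hp0, rfl⟩ ?_
    rintro _ ⟨p, hp, rfl⟩
    exact hle p hp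
  · have h1 : WH W μ ≤ ENNReal.ofReal (wHat uS uR μ + C) := by
      refine iSup₂_le fun p hp => ?_
      rw [key]
      exact ENNReal.ofReal_le_ofReal (by linarith [hsup p hp])
    have h2 := ENNReal.toReal_mono ENNReal.ofReal_ne_top h1
    rw [ENNReal.toReal_ofReal (by linarith [hsup p0 hp0, hnn' p0])] at h2
    linarith

end Helpers

/-- **Properties of `ŵ`.** The function `ŵ : ΔΘ → ℝ` is lower semicontinuous (with
respect to the weak* topology), concave (along convex combinations of probability
measures), and satisfies `ŵ(μ0) ≥ ∫ ŵ dp̄` for every information policy `p̄ ∈ I(μ0)`. -/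
theorem wHat_lowerSemicontinuous_concave_idempotent
    {A Θ : Type*}
    [TopologicalSpace A] [CompactSpace A] [TopologicalSpace.MetrizableSpace A] [Nonempty A]
    [MeasurableSpace A] [BorelSpace A]
    [TopologicalSpace Θ] [CompactSpace Θ] [TopologicalSpace.MetrizableSpace Θ] [Nonempty Θ]
    [MeasurableSpace Θ] [BorelSpace Θ]
    (uS uR : A → Θ → ℝ)
    (hS : Continuous fun p : A × Θ => uS p.1 p.2)
    (hR : Continuous fun p : A × Θ => uR p.1 p.2)
    (μ0 : ProbabilityMeasure Θ) :
    LowerSemicontinuous (wHat uS uR : ProbabilityMeasure Θ → ℝ) ∧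
    (∀ (μ μ' ν : ProbabilityMeasure Θ) (lam : ℝ), 0 ≤ lam → lam ≤ 1 →
      (ν : Measure Θ) =
        ENNReal.ofReal lam • (μ : Measure Θ) + ENNReal.ofReal (1 - lam) • (μ' : Measure Θ) →
      lam * wHat uS uR μ + (1 - lam) * wHat uS uR μ' ≤ wHat uS uR ν) ∧
    (∀ pbar ∈ infoPolicies μ0,
      ∫ ν, wHat uS uR ν ∂(pbar : Measure (ProbabilityMeasure Θ)) ≤ wHat uS uR μ0) := by
  obtain ⟨C, hC0, hC⟩ := wFun_bound (Θ := Θ) hS hR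
  have hlsc := wFun_lsc (Θ := Θ) hS hR
  set W : ProbabilityMeasure Θ → ENNReal := fun ν => ENNReal.ofReal (wFun uS uR ν + C) with hW
  have hWlsc : LowerSemicontinuous W := by
    have hc : Continuous fun x : ℝ => ENNReal.ofReal (x + C) :=
      ENNReal.continuous_ofReal.comp (continuous_id.add continuous_const)
    exact hc.comp_lowerSemicontinuous hlsc
      (fun x y hxy => ENNReal.ofReal_le_ofReal (by linarith))
  have hWle : ∀ μ, WH W μ ≤ ENNReal.ofReal (2 * C) := by
    intro μ
    refine iSup₂_le fun p _ => ?_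
    calc ∫⁻ ν, W ν ∂(p : Measure (ProbabilityMeasure Θ))
        ≤ ∫⁻ _, ENNReal.ofReal (2 * C) ∂(p : Measure (ProbabilityMeasure Θ)) :=
          lintegral_mono fun ν =>
            ENNReal.ofReal_le_ofReal (by linarith [(abs_le.1 (hC ν)).2])
      _ = ENNReal.ofReal (2 * C) := by simp
  have hfin : ∀ μ, WH W μ ≠ ⊤ := fun μ => ((hWle μ).trans_lt ENNReal.ofReal_lt_top).ne
  have heq := wHat_eq hlsc.measurable hC hfin
  have hWH := WH_lsc hWlsc hfin
  refine ⟨?_, ?_, ?_⟩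
  · intro μ y hy
    have hy : y < wHat uS uR μ := hy
    rw [heq] at hy
    have h1 : ENNReal.ofReal (max (y + C) 0) ≤ WH W μ := by
      refine (ENNReal.ofReal_le_iff_le_toReal (hfin μ)).2 (max_le (by linarith) ?_)
      exact ENNReal.toReal_nonneg
    rcases lt_or_ge (y + C) 0 with h0 | h0
    · refine Filter.Eventually.of_forall fun μ' => ?_
      change y < wHat uS uR μ'
      rw [heq]
      have : 0 ≤ (WH W μ').toReal := ENNReal.toReal_nonneg
      linarith
    · have h2 : ENNReal.ofReal (y + C) < WH W μ :=
        (ENNReal.ofReal_lt_iff_lt_toReal h0 (hfin μ)).2 (by linarith)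
      filter_upwards [hWH μ _ h2] with μ' hμ'
      change y < wHat uS uR μ'
      rw [heq]
      have := (ENNReal.ofReal_lt_iff_lt_toReal h0 (hfin μ')).1 hμ'
      linarith
  · intro μ μ' ν lam h0 h1 hν
    let m : Bool → FiniteMeasure Θ := fun b =>
      if b then lam.toNNReal • μ.toFiniteMeasure else (1 - lam).toNNReal • μ'.toFiniteMeasure
    have hm : ∑ b, m b = ν.toFiniteMeasure := by
      apply FiniteMeasure.toMeasure_injective
      rw [ProbabilityMeasure.toMeasure_comp_toFiniteMeasure_eq_toMeasure, hν]
      simp only [Fintype.sum_bool, m]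
      rfl
    have key := WH_concave hfin ν m hm
    simp only [Fintype.sum_bool, m, if_true, Bool.false_eq_true, if_false, hom_smul] at key
    have key2 := ENNReal.toReal_mono (hfin ν) key
    rw [ENNReal.toReal_add (ENNReal.mul_ne_top ENNReal.coe_ne_top (hfin _))
      (ENNReal.mul_ne_top ENNReal.coe_ne_top (hfin _)), ENNReal.toReal_mul, ENNReal.toReal_mul,
      ENNReal.coe_toReal, ENNReal.coe_toReal, Real.coe_toNNReal _ h0,
      Real.coe_toNNReal _ (by linarith)] at key2
    rw [heq, heq, heq]
    linarith
  · intro pbar hp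
    have h1 : ∫⁻ ν, WH W ν ∂(pbar : Measure (ProbabilityMeasure Θ)) ≤ WH W μ0 :=
      cell hWH hp _ fun ι _ m hm => WH_concave hfin μ0 m hm
    have hI : Integrable (fun ν => (WH W ν).toReal) (pbar : Measure (ProbabilityMeasure Θ)) := by
      refine Integrable.of_bound hWH.measurable.ennreal_toReal.aestronglyMeasurable (2 * C)
        (Filter.Eventually.of_forall fun ν => ?_)
      rw [Real.norm_eq_abs, abs_of_nonneg ENNReal.toReal_nonneg]
      exact ENNReal.toReal_le_of_le_ofReal (by linarith) (hWle ν)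
    have h2 : ∫ ν, wHat uS uR ν ∂(pbar : Measure (ProbabilityMeasure Θ)) =
        (∫⁻ ν, WH W ν ∂(pbar : Measure (ProbabilityMeasure Θ))).toReal - C := by
      rw [integral_congr_ae (Filter.Eventually.of_forall heq), integral_sub hI (integrable_const C),
        integral_toReal hWH.measurable.aemeasurable
          (Filter.Eventually.of_forall fun ν => (hfin ν).lt_top)]
      simp
    rw [h2, heq]
    have := ENNReal.toReal_mono (hfin μ0) h1
    linarith
end

section
/- Suppose D ⊆ ΔΘ is a Borel set, p ∈ I(μ0) has p(D) = 1, and f : ΔΘ → ℝ is bounded and measurable. Suppose every μ̄ ∈ D admits some μ ∈ ΔΘ and γ > 0 with γμ ≤ μ̄ such that ŵ(λμ + (1−λ)μ̄) ≥ f(μ̄) for all sufficiently small λ ∈ (0,1]. Then ŵ(μ0) ≥ ∫ f dp. -/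
open MeasureTheory


/-- `γμ ≤ mubar`: the measure `μ` scaled by `γ` is setwise below `mubar`. -/
def scaledLE {Θ : Type*} [MeasurableSpace Θ]
    (γ : ℝ) (μ mubar : ProbabilityMeasure Θ) : Prop :=
  ∀ E : Set Θ, MeasurableSet E →
    ENNReal.ofReal γ * (μ : Measure Θ) E ≤ (mubar : Measure Θ) E


namespace LP

open Filter Topology

/-- penalized value functional on utility sequences -/
noncomputable def Wf (k : ℝ) (s r : ℕ → ℝ) : ℝ := ⨅ n, (s n + k * ((⨆ m, r m) - r n))

lemma bddAbove_of_abs {r : ℕ → ℝ} {b : ℝ} (hr : ∀ n, |r n| ≤ b) : BddAbove (Set.range r) :=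
  ⟨b, by rintro _ ⟨n, rfl⟩; exact (abs_le.1 (hr n)).2⟩

lemma Wf_bddBelow {k b : ℝ} (hk : 0 ≤ k) {s r : ℕ → ℝ} (hs : ∀ n, |s n| ≤ b)
    (hr : ∀ n, |r n| ≤ b) :
    BddBelow (Set.range fun n => (s n + k * ((⨆ m, r m) - r n))) := by
  refine ⟨-b, ?_⟩
  rintro _ ⟨n, rfl⟩
  have h1 : r n ≤ ⨆ m, r m := le_ciSup (bddAbove_of_abs hr) n
  have h2 := (abs_le.1 (hs n)).1
  have h3 : 0 ≤ k * ((⨆ m, r m) - r n) := mul_nonneg hk (by linarith)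
  show -b ≤ s n + k * ((⨆ m, r m) - r n)
  linarith

lemma Wf_lip {k b δ : ℝ} (hk : 0 ≤ k) {s r s' r' : ℕ → ℝ} (hs : ∀ n, |s n| ≤ b)
    (hr : ∀ n, |r n| ≤ b) (hr' : ∀ n, |r' n| ≤ b)
    (hss : ∀ n, |s n - s' n| ≤ δ) (hrr : ∀ n, |r n - r' n| ≤ δ) :
    Wf k s r ≤ Wf k s' r' + (1 + 2 * k) * δ := by
  rw [← sub_le_iff_le_add]
  refine le_ciInf fun n => ?_
  have h1 : Wf k s r ≤ s n + k * ((⨆ m, r m) - r n) := ciInf_le (Wf_bddBelow hk hs hr) n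
  have h2 : (⨆ m, r m) ≤ (⨆ m, r' m) + δ := by
    refine ciSup_le fun m => ?_
    have := le_ciSup (bddAbove_of_abs hr') m
    have := (abs_le.1 (hrr m)).2
    linarith
  have h3 := (abs_le.1 (hss n)).2
  have h4 := (abs_le.1 (hrr n)).1
  have h5 : k * ((⨆ m, r m) - r n) ≤ k * ((⨆ m, r' m) - r' n + 2 * δ) :=
    mul_le_mul_of_nonneg_left (by linarith) hk
  linarith

lemma Wf_smul {k c : ℝ} (hc : 0 ≤ c) (s r : ℕ → ℝ) :
    Wf k (fun n => c * s n) (fun n => c * r n) = c * Wf k s r := by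
  unfold Wf
  rw [Real.mul_iInf_of_nonneg hc, ← Real.mul_iSup_of_nonneg hc]
  congr 1; ext n; ring

lemma Wf_ge {k b : ℝ} (hk : 0 ≤ k) {s r : ℕ → ℝ} (hs : ∀ n, |s n| ≤ b)
    (hr : ∀ n, |r n| ≤ b) : -b ≤ Wf k s r := by
  refine le_ciInf fun n => ?_
  have h1 : r n ≤ ⨆ m, r m := le_ciSup (bddAbove_of_abs hr) n
  have h2 := (abs_le.1 (hs n)).1
  have h3 : 0 ≤ k * ((⨆ m, r m) - r n) := mul_nonneg hk (by linarith)
  linarith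

/-- Facts about the limit of penalized values. -/
lemma Wf_limit {A : Type*} [TopologicalSpace A] [CompactSpace A] [Nonempty A]
    (d : ℕ → A) (hd : DenseRange d) (s r : A → ℝ) (hs : Continuous s) (hr : Continuous r)
    {b : ℝ} (hsb : ∀ a, |s a| ≤ b) (hrb : ∀ a, |r a| ≤ b) :
    let w := sInf (s '' {a | ∀ a', r a' ≤ r a})
    |w| ≤ b ∧ (∀ k : ℝ, 0 ≤ k → Wf k (fun n => s (d n)) (fun n => r (d n)) ≤ w) ∧
    Tendsto (fun k : ℕ => Wf k (fun n => s (d n)) (fun n => r (d n))) atTop (𝓝 w) := by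
  intro w
  obtain ⟨a0, -, ha0⟩ := isCompact_univ.exists_isMaxOn (Set.univ_nonempty (α := A)) hr.continuousOn
  have ha0' : ∀ a', r a' ≤ r a0 := fun a' => ha0 (Set.mem_univ a')
  have hM : (⨆ m, r (d m)) = r a0 := by
    apply le_antisymm
    · exact ciSup_le fun m => ha0' _
    · have hcl : IsClosed {a | r a ≤ ⨆ m, r (d m)} := isClosed_le hr continuous_const
      exact hd.induction_on (p := fun a => r a ≤ ⨆ m, r (d m)) a0 hcl
        fun n => le_ciSup (f := fun n => r (d n)) (bddAbove_of_abs fun n => hrb _) n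
  have hbdd : BddBelow (s '' {a | ∀ a', r a' ≤ r a}) :=
    ⟨-b, by rintro _ ⟨a, -, rfl⟩; exact (abs_le.1 (hsb a)).1⟩
  have hne : (s '' {a | ∀ a', r a' ≤ r a}).Nonempty := ⟨_, a0, ha0', rfl⟩
  have hwb : |w| ≤ b := by
    rw [abs_le]
    constructor
    · exact le_csInf hne (by rintro _ ⟨a, -, rfl⟩; exact (abs_le.1 (hsb a)).1)
    · exact (csInf_le hbdd ⟨a0, ha0', rfl⟩).trans (abs_le.1 (hsb a0)).2
  have hup : ∀ k : ℝ, 0 ≤ k → Wf k (fun n => s (d n)) (fun n => r (d n)) ≤ w := by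
    intro k hk
    refine le_csInf hne ?_
    rintro _ ⟨a, ha, rfl⟩
    have hcl : IsClosed {a | Wf k (fun n => s (d n)) (fun n => r (d n)) ≤
      s a + k * (r a0 - r a)} := isClosed_le continuous_const (by fun_prop)
    have := hd.induction_on (p := fun a => Wf k (fun n => s (d n)) (fun n => r (d n)) ≤
      s a + k * (r a0 - r a)) a hcl (fun n => by
        rw [← hM]
        exact ciInf_le (Wf_bddBelow (s := fun n => s (d n)) hk (fun n => hsb _) (fun n => hrb _)) n)
    have h2 : r a0 = r a := le_antisymm (ha a0) (ha0' a)
    simpa [h2] using this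
  refine ⟨hwb, hup, ?_⟩
  rw [Metric.tendsto_atTop]
  intro ε hε
  have key : ∃ N : ℕ, ∀ k : ℕ, N ≤ k → ∀ a, w - ε / 2 ≤ s a + k * (r a0 - r a) := by
    have hcp : IsCompact {a | s a ≤ w - ε / 2} := (isClosed_le hs continuous_const).isCompact
    rcases Set.eq_empty_or_nonempty {a | s a ≤ w - ε / 2} with he | hne'
    · refine ⟨0, fun k _ a => ?_⟩
      have h1 : ¬ (s a ≤ w - ε / 2) := fun h => by
        have : a ∈ {a | s a ≤ w - ε / 2} := h
        rw [he] at this; exact this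
      have : (0:ℝ) ≤ k * (r a0 - r a) := mul_nonneg (by positivity) (by linarith [ha0' a])
      linarith
    · obtain ⟨a1, ha1, hmax⟩ := hcp.exists_isMaxOn hne' hr.continuousOn
      have hlt : r a1 < r a0 := by
        by_contra hcon
        have : w ≤ s a1 := csInf_le hbdd ⟨a1, fun a' => (ha0' a').trans (not_lt.1 hcon), rfl⟩
        have h2 : s a1 ≤ w - ε / 2 := ha1
        linarith
      obtain ⟨N, hN⟩ := exists_nat_ge ((2 * b) / (r a0 - r a1))
      refine ⟨N, fun k hk a => ?_⟩
      by_cases ha : s a ≤ w - ε / 2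
      · have h1 : r a ≤ r a1 := hmax ha
        have h2 : 2 * b ≤ N * (r a0 - r a1) := by
          rwa [div_le_iff₀ (by linarith)] at hN
        have h3 : (N:ℝ) * (r a0 - r a1) ≤ k * (r a0 - r a) :=
          mul_le_mul (by exact_mod_cast hk) (by linarith) (by linarith) (by positivity)
        have := (abs_le.1 (hsb a)).1
        have := (abs_le.1 hwb).2
        linarith
      · have : (0:ℝ) ≤ k * (r a0 - r a) := mul_nonneg (by positivity) (by linarith [ha0' a])
        linarith
  obtain ⟨N, hN⟩ := key
  refine ⟨N, fun k hk => ?_⟩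
  have h1 := hup k (by positivity)
  have h2 : w - ε / 2 ≤ Wf k (fun n => s (d n)) (fun n => r (d n)) := by
    refine le_ciInf fun n => ?_
    rw [hM]; exact hN k hk _
  rw [Real.dist_eq, abs_lt]
  constructor <;> linarith

variable {Θ : Type*} [MeasurableSpace Θ]

lemma measurable_coe : Measurable (fun μ : ProbabilityMeasure Θ => (μ : Measure Θ)) :=
  comap_measurable _

lemma measurable_to_pm {X : Type*} [MeasurableSpace X] {T : X → ProbabilityMeasure Θ}
    (hT : ∀ E, MeasurableSet E → Measurable fun x => (T x : Measure Θ) E) : Measurable T :=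
  measurable_comap_iff.2 (Measure.measurable_of_measurable_coe _ hT)

lemma mem_info_iff (μ0 : ProbabilityMeasure Θ) (p : ProbabilityMeasure (ProbabilityMeasure Θ)) :
    p ∈ infoPolicies μ0 ↔ ∀ B, MeasurableSet B →
      ∫⁻ ν, (ν : Measure Θ) B ∂(p : Measure (ProbabilityMeasure Θ)) = (μ0 : Measure Θ) B := by
  refine forall_congr' fun B => forall_congr' fun hB => ?_
  have hm : Measurable fun ν : ProbabilityMeasure Θ => (ν : Measure Θ) B :=
    (Measure.measurable_coe hB).comp measurable_coe
  rw [integral_toReal hm.aemeasurable (ae_of_all _ fun ν => measure_lt_top _ _)]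
  rw [ENNReal.toReal_eq_toReal_iff' _ (measure_ne_top _ _)]
  refine ((lintegral_mono (g := fun _ => 1) fun ν => prob_le_one).trans_lt ?_).ne
  simp

lemma measurable_integral_pm {u : Θ → ℝ} (hu : Measurable u) {b : ℝ} (hb : ∀ θ, |u θ| ≤ b) :
    Measurable fun μ : ProbabilityMeasure Θ => ∫ θ, u θ ∂(μ : Measure Θ) := by
  have : (fun μ : ProbabilityMeasure Θ => ∫ θ, u θ ∂(μ : Measure Θ)) = fun μ : ProbabilityMeasure Θ =>
      (∫⁻ θ, ENNReal.ofReal (u θ + b) ∂(μ : Measure Θ)).toReal - b := by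
    ext μ
    have hi : Integrable u (μ : Measure Θ) :=
      Integrable.of_bound hu.aestronglyMeasurable b (ae_of_all _ hb)
    rw [← integral_eq_lintegral_of_nonneg_ae, integral_add hi (integrable_const b)]
    · simp
    · exact ae_of_all _ fun θ => by show 0 ≤ u θ + b; linarith [(abs_le.1 (hb θ)).1]
    · exact (hu.add_const b).aestronglyMeasurable
  rw [this]
  refine Measurable.sub_const (Measurable.ennreal_toReal ?_) _
  exact (Measure.measurable_lintegral (by fun_prop)).comp measurable_coe

lemma abs_integral_pm_le {u : Θ → ℝ} {b : ℝ} (hb : ∀ θ, |u θ| ≤ b) (μ : Measure Θ)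
    [IsProbabilityMeasure μ] : |∫ θ, u θ ∂μ| ≤ b := by
  have := norm_integral_le_of_norm_le_const (μ := μ) (f := u) (C := b) (ae_of_all _ hb)
  simpa using this

open scoped ENNReal

/-- bundling a probability measure -/
noncomputable def mkPM {X : Type*} [MeasurableSpace X] (m : Measure X)
    (h : IsProbabilityMeasure m) : ProbabilityMeasure X := ⟨m, h⟩

lemma coe_mkPM {X : Type*} [MeasurableSpace X] (m : Measure X) (h : IsProbabilityMeasure m) :
    (mkPM m h : Measure X) = m := rfl

lemma measurable_eval {B : Set Θ} (hB : MeasurableSet B) :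
    Measurable fun μ : ProbabilityMeasure Θ => (μ : Measure Θ) B :=
  (Measure.measurable_coe hB).comp measurable_coe

lemma integral_bind_pm {X Y : Type*} [MeasurableSpace X] [MeasurableSpace Y] (p : Measure X)
    [IsFiniteMeasure p] (κ : X → Measure Y) (hκ : Measurable κ) (hp : ∀ x, IsProbabilityMeasure (κ x))
    {g : Y → ℝ} (hg : Measurable g) {b : ℝ} (hb : ∀ y, |g y| ≤ b) :
    ∫ y, g y ∂(p.bind κ) = ∫ x, ∫ y, g y ∂(κ x) ∂p := by
  let K : ProbabilityTheory.Kernel X Y := ⟨κ, hκ⟩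
  have : ProbabilityTheory.IsMarkovKernel K := ⟨hp⟩
  have : IsFiniteMeasure (p.bind K) := inferInstance
  have hb' : p.bind κ = (K.comp (ProbabilityTheory.Kernel.const Unit p)) () :=
    Measure.comp_eq_comp_const_apply (κ := K)
  rw [hb', ProbabilityTheory.Kernel.integral_comp]
  · rfl
  · exact Integrable.of_bound hg.aestronglyMeasurable b (ae_of_all _ hb)

/-- posterior after a signal with likelihood `φ` -/
noncomputable def post (φ : Θ → ℝ≥0∞) (ν : ProbabilityMeasure Θ) : ProbabilityMeasure Θ :=
  if h : (∫⁻ θ, φ θ ∂(ν : Measure Θ)) = 0 ∨ (∫⁻ θ, φ θ ∂(ν : Measure Θ)) = ⊤ then ν else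
    mkPM ((∫⁻ θ, φ θ ∂(ν : Measure Θ))⁻¹ • (ν : Measure Θ).withDensity φ) (by
      push Not at h
      constructor
      simp only [Measure.smul_apply, smul_eq_mul]
      rw [withDensity_apply _ MeasurableSet.univ, Measure.restrict_univ]
      exact ENNReal.inv_mul_cancel h.1 h.2)

lemma post_pos {φ : Θ → ℝ≥0∞} {ν : ProbabilityMeasure Θ}
    (h : (∫⁻ θ, φ θ ∂(ν : Measure Θ)) = 0 ∨ (∫⁻ θ, φ θ ∂(ν : Measure Θ)) = ⊤) :
    post φ ν = ν := dif_pos h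

lemma post_neg {φ : Θ → ℝ≥0∞} {ν : ProbabilityMeasure Θ}
    (h : ¬ ((∫⁻ θ, φ θ ∂(ν : Measure Θ)) = 0 ∨ (∫⁻ θ, φ θ ∂(ν : Measure Θ)) = ⊤)) :
    (post φ ν : Measure Θ) =
      (∫⁻ θ, φ θ ∂(ν : Measure Θ))⁻¹ • (ν : Measure Θ).withDensity φ := by
  unfold post
  split_ifs
  rfl

lemma smul_post {φ : Θ → ℝ≥0∞} (hφ : Measurable φ) (h1 : ∀ θ, φ θ ≤ 1) (ν : ProbabilityMeasure Θ) :
    (∫⁻ θ, φ θ ∂(ν : Measure Θ)) • (post φ ν : Measure Θ) = (ν : Measure Θ).withDensity φ := by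
  have hT : (∫⁻ θ, φ θ ∂(ν : Measure Θ)) ≠ ⊤ := by
    refine ((lintegral_mono (g := fun _ => 1) h1).trans_lt ?_).ne
    simp
  by_cases h : (∫⁻ θ, φ θ ∂(ν : Measure Θ)) = 0
  · rw [h, zero_smul]
    symm
    rw [← Measure.measure_univ_eq_zero, withDensity_apply _ MeasurableSet.univ,
      Measure.restrict_univ, h]
  · rw [post_neg (by tauto), smul_smul, ENNReal.mul_inv_cancel h hT, one_smul]

lemma measurable_post {φ : Θ → ℝ≥0∞} (hφ : Measurable φ) : Measurable (post φ) := by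
  have hm : Measurable fun ν : ProbabilityMeasure Θ => ∫⁻ θ, φ θ ∂(ν : Measure Θ) :=
    (Measure.measurable_lintegral hφ).comp measurable_coe
  have hset : MeasurableSet {ν : ProbabilityMeasure Θ | (∫⁻ θ, φ θ ∂(ν : Measure Θ)) = 0 ∨
      (∫⁻ θ, φ θ ∂(ν : Measure Θ)) = ⊤} :=
    (hm (measurableSet_singleton 0)).union (hm (measurableSet_singleton ⊤))
  refine measurable_to_pm fun E hE => ?_
  classical
  have : (fun ν : ProbabilityMeasure Θ => (post φ ν : Measure Θ) E) = fun ν : ProbabilityMeasure Θ =>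
      if (∫⁻ θ, φ θ ∂(ν : Measure Θ)) = 0 ∨ (∫⁻ θ, φ θ ∂(ν : Measure Θ)) = ⊤ then
        (ν : Measure Θ) E else
        (∫⁻ θ, φ θ ∂(ν : Measure Θ))⁻¹ * ∫⁻ θ, E.indicator φ θ ∂(ν : Measure Θ) := by
    ext ν
    split_ifs with h
    · rw [post_pos h]
    · rw [post_neg h, Measure.smul_apply, withDensity_apply _ hE, lintegral_indicator hE, smul_eq_mul]
  rw [this]
  refine Measurable.ite hset ((Measure.measurable_coe hE).comp measurable_coe) ?_
  exact hm.inv.mul ((Measure.measurable_lintegral (hφ.indicator hE)).comp measurable_coe)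

/-- the distribution of posteriors generated by a finite experiment -/
noncomputable def kap {ι : Type*} [Fintype ι] (π : ι → Θ → ℝ≥0∞) (ν : ProbabilityMeasure Θ) :
    Measure (ProbabilityMeasure Θ) :=
  ∑ i, (∫⁻ θ, π i θ ∂(ν : Measure Θ)) • Measure.dirac (post (π i) ν)

section kap
variable {ι : Type*} [Fintype ι] {π : ι → Θ → ℝ≥0∞}

lemma lintegral_kap (ν : ProbabilityMeasure Θ) {g : ProbabilityMeasure Θ → ℝ≥0∞}
    (hg : Measurable g) : ∫⁻ μ, g μ ∂(kap π ν) =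
      ∑ i, (∫⁻ θ, π i θ ∂(ν : Measure Θ)) * g (post (π i) ν) := by
  unfold kap
  rw [lintegral_finsetSum_measure]
  refine Finset.sum_congr rfl fun i _ => ?_
  rw [lintegral_smul_measure, lintegral_dirac' _ hg, smul_eq_mul]

lemma kap_bary (hm : ∀ i, Measurable (π i)) (h1 : ∀ θ, ∑ i, π i θ = 1) (ν : ProbabilityMeasure Θ)
    {B : Set Θ} (hB : MeasurableSet B) :
    ∫⁻ μ, (μ : Measure Θ) B ∂(kap π ν) = (ν : Measure Θ) B := by
  rw [lintegral_kap ν (measurable_eval hB)]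
  have hle : ∀ i θ, π i θ ≤ 1 := fun i θ => by
    rw [← h1 θ]; exact Finset.single_le_sum (f := fun i => π i θ) (fun _ _ => zero_le) (Finset.mem_univ i)
  have : ∀ i, (∫⁻ θ, π i θ ∂(ν : Measure Θ)) * (post (π i) ν : Measure Θ) B
      = ∫⁻ θ in B, π i θ ∂(ν : Measure Θ) := fun i => by
    rw [← withDensity_apply _ hB, ← smul_post (hm i) (hle i) ν, Measure.smul_apply, smul_eq_mul]
  simp_rw [this]
  rw [← lintegral_finsetSum _ (fun i _ => hm i)]
  simp [h1]

lemma kap_prob (hm : ∀ i, Measurable (π i)) (h1 : ∀ θ, ∑ i, π i θ = 1) (ν : ProbabilityMeasure Θ) :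
    IsProbabilityMeasure (kap π ν) := by
  constructor
  have := kap_bary hm h1 ν MeasurableSet.univ
  simpa using this

lemma measurable_kap (hm : ∀ i, Measurable (π i)) : Measurable (kap π) := by
  refine Measure.measurable_of_measurable_coe _ fun E hE => ?_
  have : (fun ν => kap π ν E) = fun ν : ProbabilityMeasure Θ =>
      ∑ i, (∫⁻ θ, π i θ ∂(ν : Measure Θ)) * E.indicator 1 (post (π i) ν) := by
    ext ν
    rw [← lintegral_kap ν (measurable_one.indicator hE), lintegral_indicator_one hE]
  rw [this]
  refine Finset.measurable_sum _ fun i _ => ?_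
  exact ((Measure.measurable_lintegral (hm i)).comp measurable_coe).mul
    ((measurable_one.indicator hE).comp (measurable_post (hm i)))

lemma integral_kap (h1 : ∀ i θ, π i θ ≤ 1) (ν : ProbabilityMeasure Θ)
    {g : ProbabilityMeasure Θ → ℝ} (hg : Measurable g) {b : ℝ} (hb : ∀ μ, |g μ| ≤ b) :
    ∫ μ, g μ ∂(kap π ν) =
      ∑ i, (∫⁻ θ, π i θ ∂(ν : Measure Θ)).toReal * g (post (π i) ν) := by
  unfold kap
  have hT : ∀ i, (∫⁻ θ, π i θ ∂(ν : Measure Θ)) ≠ ⊤ := fun i => by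
    refine ((lintegral_mono (g := fun _ => 1) (h1 i)).trans_lt ?_).ne
    simp
  rw [integral_finsetSum_measure]
  · refine Finset.sum_congr rfl fun i _ => ?_
    rw [integral_smul_measure, integral_dirac' _ _ hg.stronglyMeasurable, smul_eq_mul]
  · intro i _
    refine Integrable.smul_measure ?_ (hT i)
    exact Integrable.of_bound hg.aestronglyMeasurable b (ae_of_all _ hb)
end kap

/-- measurable selection from a countable family of kernels -/
lemma select (μ0 : ProbabilityMeasure Θ) (p : ProbabilityMeasure (ProbabilityMeasure Θ))
    (hp : p ∈ infoPolicies μ0) (D : Set (ProbabilityMeasure Θ)) (hD : MeasurableSet D)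
    (hpD : (p : Measure (ProbabilityMeasure Θ)) D = 1)
    (κ : ℕ → ProbabilityMeasure Θ → Measure (ProbabilityMeasure Θ))
    (hκm : ∀ j, Measurable (κ j)) (hκp : ∀ j ν, IsProbabilityMeasure (κ j ν))
    (hκb : ∀ j ν B, MeasurableSet B → ∫⁻ μ, (μ : Measure Θ) B ∂(κ j ν) = (ν : Measure Θ) B)
    (w g : ProbabilityMeasure Θ → ℝ) (hw : Measurable w) (hg : Measurable g)
    {b : ℝ} (hwb : ∀ μ, |w μ| ≤ b) (hgb : ∀ μ, |g μ| ≤ b)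
    (h : ∀ ν ∈ D, ∃ j, g ν ≤ ∫ μ, w μ ∂(κ j ν)) :
    ∃ p' ∈ infoPolicies μ0, ∫ ν, g ν ∂(p : Measure (ProbabilityMeasure Θ)) ≤
      ∫ ν, w ν ∂(p' : Measure (ProbabilityMeasure Θ)) := by
  classical
  have hex : ∀ ν, ∃ j, (ν ∈ D → g ν ≤ ∫ μ, w μ ∂(κ j ν)) := fun ν => by
    by_cases hν : ν ∈ D
    · obtain ⟨j, hj⟩ := h ν hν; exact ⟨j, fun _ => hj⟩
    · exact ⟨0, fun h => absurd h hν⟩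
  have hval : ∀ j, Measurable fun ν => ∫ μ, w μ ∂(κ j ν) := fun j => by
    let K : ProbabilityTheory.Kernel (ProbabilityMeasure Θ) (ProbabilityMeasure Θ) := ⟨κ j, hκm j⟩
    have : ProbabilityTheory.IsMarkovKernel K := ⟨hκp j⟩
    exact (StronglyMeasurable.integral_kernel (κ := K) hw.stronglyMeasurable).measurable
  let N : ProbabilityMeasure Θ → ℕ := fun ν => Nat.find (hex ν)
  have hN : Measurable N := by
    refine measurable_find hex fun j => ?_
    have : {ν | ν ∈ D → g ν ≤ ∫ μ, w μ ∂(κ j ν)} = Dᶜ ∪ {ν | g ν ≤ ∫ μ, w μ ∂(κ j ν)} := by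
      ext ν; simp [imp_iff_not_or]
    rw [this]
    exact hD.compl.union (measurableSet_le hg (hval j))
  have hNs : ∀ ν ∈ D, g ν ≤ ∫ μ, w μ ∂(κ (N ν) ν) := fun ν hν => Nat.find_spec (hex ν) hν
  let κ' : ProbabilityMeasure Θ → Measure (ProbabilityMeasure Θ) := fun ν => κ (N ν) ν
  have hκ' : Measurable κ' :=
    (measurable_from_prod_countable_right (f := fun x : ℕ × ProbabilityMeasure Θ => κ x.1 x.2)
      (fun j => hκm j)).comp (hN.prodMk measurable_id)
  have hκ'p : ∀ ν, IsProbabilityMeasure (κ' ν) := fun ν => hκp _ _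
  have hprob : IsProbabilityMeasure ((p : Measure (ProbabilityMeasure Θ)).bind κ') :=
    isProbabilityMeasure_bind hκ'.aemeasurable (ae_of_all _ hκ'p)
  refine ⟨mkPM _ hprob, ?_, ?_⟩
  · rw [mem_info_iff] at hp ⊢
    intro B hB
    rw [coe_mkPM, Measure.lintegral_bind hκ'.aemeasurable
      (measurable_eval hB).aemeasurable]
    rw [← hp B hB]
    exact lintegral_congr fun ν => hκb _ _ _ hB
  · rw [coe_mkPM, integral_bind_pm _ κ' hκ' hκ'p hw hwb]
    have hm' : Measurable fun ν => ∫ μ, w μ ∂(κ' ν) := by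
      let K : ProbabilityTheory.Kernel (ProbabilityMeasure Θ) (ProbabilityMeasure Θ) := ⟨κ', hκ'⟩
      have : ProbabilityTheory.IsMarkovKernel K := ⟨hκ'p⟩
      exact (StronglyMeasurable.integral_kernel (κ := K) hw.stronglyMeasurable).measurable
    refine integral_mono_ae (Integrable.of_bound hg.aestronglyMeasurable b (ae_of_all _ hgb)) ?_ ?_
    · refine Integrable.of_bound hm'.aestronglyMeasurable b (ae_of_all _ fun ν => ?_)
      have := norm_integral_le_of_norm_le_const (μ := κ' ν) (f := w) (C := b) (ae_of_all _ hwb)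
      simpa using this
    · have : ∀ᵐ ν ∂(p : Measure (ProbabilityMeasure Θ)), ν ∈ D :=
        (prob_compl_eq_zero_iff hD).2 hpD
      filter_upwards [this] with ν hν using hNs ν hν

lemma cells1 {A : Type*} [TopologicalSpace A] [CompactSpace A]
    [TopologicalSpace Θ] [CompactSpace Θ] [BorelSpace Θ]
    (u : A → Θ → ℝ) (hu : Continuous fun p : A × Θ => u p.1 p.2) {b : ℝ}
    (hb : ∀ a θ, |u a θ| ≤ b) {δ : ℝ} (hδ : 0 < δ) :
    ∃ (N : ℕ) (c : ProbabilityMeasure Θ → Fin N), Measurable c ∧ ∀ μ μ', c μ = c μ' → ∀ a,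
      |∫ θ, u a θ ∂(μ : Measure Θ) - ∫ θ, u a θ ∂(μ' : Measure Θ)| ≤ δ := by
  classical
  let F : C(A, C(Θ, ℝ)) := ContinuousMap.curry ⟨fun p : A × Θ => u p.1 p.2, hu⟩
  have hF : ∀ a θ, F a θ = u a θ := fun a θ => rfl
  have hη : 0 < δ / 3 := by positivity
  obtain ⟨t, -, ht⟩ := isCompact_univ.elim_nhds_subcover (fun a : A => F ⁻¹' Metric.ball (F a) (δ / 3))
    (fun a _ => F.continuous.continuousAt.preimage_mem_nhds (Metric.ball_mem_nhds _ hη))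
  have hcu : ∀ a, Measurable (u a) := fun a =>
    (hu.comp (Continuous.prodMk_right a)).measurable
  have hinteg : ∀ a (μ : ProbabilityMeasure Θ), Integrable (u a) (μ : Measure Θ) := fun a μ =>
    Integrable.of_bound (hcu a).aestronglyMeasurable b (ae_of_all _ (hb a))
  have hU : ∀ a (μ : ProbabilityMeasure Θ), |∫ θ, u a θ ∂(μ : Measure Θ)| ≤ b := fun a μ =>
    abs_integral_pm_le (hb a) _
  let M : ℕ := ⌊(2 * b) / (δ / 3)⌋₊ + 1
  let fl : A → ProbabilityMeasure Θ → ℕ := fun a μ => ⌊((∫ θ, u a θ ∂(μ : Measure Θ)) + b) / (δ / 3)⌋₊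
  have hfl : ∀ a μ, fl a μ < M := fun a μ => by
    refine Nat.lt_succ_of_le (Nat.floor_le_floor ?_)
    have := (abs_le.1 (hU a μ)).2
    gcongr
    linarith
  let c0 : ProbabilityMeasure Θ → (t → Fin M) := fun μ a => ⟨fl a μ, hfl a μ⟩
  have hc0 : Measurable c0 := by
    refine measurable_pi_iff.2 fun a => ?_
    refine measurable_to_countable' fun x => ?_
    have : (fun μ => c0 μ a) ⁻¹' {x} = (fl a) ⁻¹' {x.1} := by
      ext μ
      simp [c0, Fin.ext_iff]
    rw [this]
    have hm : Measurable (fl a) :=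
      Nat.measurable_floor.comp (((measurable_integral_pm (hcu a) (hb a)).add_const b).div_const _)
    exact hm (measurableSet_singleton _)
  refine ⟨Fintype.card (t → Fin M), fun μ => Fintype.equivFin _ (c0 μ),
    (measurable_of_countable _).comp hc0, fun μ μ' h a => ?_⟩
  have h0 : c0 μ = c0 μ' := (Fintype.equivFin _).injective h
  obtain ⟨a', ha', haa⟩ : ∃ a' ∈ t, dist (F a) (F a') < δ / 3 := by
    have := ht (Set.mem_univ a)
    simpa using this
  have h1 : fl a' μ = fl a' μ' := congrArg Fin.val (congrFun h0 ⟨a', ha'⟩)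
  have hpos : ∀ ρ : ProbabilityMeasure Θ, 0 ≤ ((∫ θ, u a' θ ∂(ρ : Measure Θ)) + b) / (δ / 3) :=
    fun ρ => div_nonneg (by linarith [(abs_le.1 (hU a' ρ)).1]) hη.le
  have h2 : ∀ ρ ρ' : ProbabilityMeasure Θ, fl a' ρ = fl a' ρ' →
      (∫ θ, u a' θ ∂(ρ : Measure Θ)) - (∫ θ, u a' θ ∂(ρ' : Measure Θ)) ≤ δ / 3 := by
    intro ρ ρ' hρ
    have e1 := Nat.lt_floor_add_one (((∫ θ, u a' θ ∂(ρ : Measure Θ)) + b) / (δ / 3))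
    have e2 := Nat.floor_le (hpos ρ')
    change _ < ((fl a' ρ : ℕ) : ℝ) + 1 at e1
    change ((fl a' ρ' : ℕ) : ℝ) ≤ _ at e2
    rw [hρ] at e1
    have e3 : ((∫ θ, u a' θ ∂(ρ : Measure Θ)) + b) / (δ / 3) <
      ((∫ θ, u a' θ ∂(ρ' : Measure Θ)) + b) / (δ / 3) + 1 := by linarith
    rw [div_add_one hη.ne', div_lt_div_iff_of_pos_right hη] at e3
    linarith
  have h3 : ∀ ρ : ProbabilityMeasure Θ,
      |∫ θ, u a θ ∂(ρ : Measure Θ) - ∫ θ, u a' θ ∂(ρ : Measure Θ)| ≤ δ / 3 := fun ρ => by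
    rw [← integral_sub (hinteg a ρ) (hinteg a' ρ)]
    refine abs_integral_pm_le (fun θ => ?_) _
    have := ContinuousMap.dist_apply_le_dist (f := F a) (g := F a') θ
    rw [Real.dist_eq, hF, hF] at this
    linarith
  have i1 := abs_le.1 (h3 μ)
  have i2 := abs_le.1 (h3 μ')
  have i3 := h2 μ μ' h1
  have i4 := h2 μ' μ h1.symm
  rw [abs_le]
  constructor <;> linarith

lemma cells2 {A : Type*} [TopologicalSpace A] [CompactSpace A]
    [TopologicalSpace Θ] [CompactSpace Θ] [BorelSpace Θ]
    (u v : A → Θ → ℝ) (hu : Continuous fun p : A × Θ => u p.1 p.2)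
    (hv : Continuous fun p : A × Θ => v p.1 p.2) {b : ℝ}
    (hub : ∀ a θ, |u a θ| ≤ b) (hvb : ∀ a θ, |v a θ| ≤ b) {δ : ℝ} (hδ : 0 < δ) :
    ∃ (N : ℕ) (c : ProbabilityMeasure Θ → Fin N), Measurable c ∧ ∀ μ μ', c μ = c μ' → ∀ a,
      |∫ θ, u a θ ∂(μ : Measure Θ) - ∫ θ, u a θ ∂(μ' : Measure Θ)| ≤ δ ∧
      |∫ θ, v a θ ∂(μ : Measure Θ) - ∫ θ, v a θ ∂(μ' : Measure Θ)| ≤ δ := by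
  obtain ⟨N1, c1, hm1, h1⟩ := cells1 u hu hub hδ
  obtain ⟨N2, c2, hm2, h2⟩ := cells1 v hv hvb hδ
  refine ⟨N1 * N2, fun μ => finProdFinEquiv (c1 μ, c2 μ),
    (measurable_of_countable _).comp (hm1.prodMk hm2), fun μ μ' h a => ?_⟩
  have := finProdFinEquiv.injective h
  rw [Prod.mk.injEq] at this
  exact ⟨h1 _ _ this.1 a, h2 _ _ this.2 a⟩

lemma densities (ν : ProbabilityMeasure Θ) (q : ProbabilityMeasure (ProbabilityMeasure Θ))
    (hq : q ∈ infoPolicies ν) {n : ℕ} (c : ProbabilityMeasure Θ → Fin n) (hc : Measurable c) :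
    ∃ g : Fin n → Θ → ℝ, (∀ i, Integrable (g i) (ν : Measure Θ)) ∧ (∀ i θ, 0 ≤ g i θ) ∧
      (∀ᵐ θ ∂(ν : Measure Θ), ∑ i, g i θ = 1) ∧
      ∀ i (u : Θ → ℝ) (b : ℝ), Measurable u → (∀ θ, |u θ| ≤ b) →
        ∫ θ, g i θ * u θ ∂(ν : Measure Θ) =
          ∫ μ in c ⁻¹' {i}, (∫ θ, u θ ∂(μ : Measure Θ)) ∂(q : Measure (ProbabilityMeasure Θ)) := by
  rw [mem_info_iff] at hq
  have hC : ∀ i, MeasurableSet (c ⁻¹' {i}) := fun i => hc (measurableSet_singleton i)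
  let Q : Measure (ProbabilityMeasure Θ) := q
  let m : Fin n → Measure Θ := fun i => (Q.restrict (c ⁻¹' {i})).bind (fun μ => (μ : Measure Θ))
  have hm : ∀ i E, MeasurableSet E → m i E = ∫⁻ μ in c ⁻¹' {i}, (μ : Measure Θ) E ∂Q :=
    fun i E hE => Measure.bind_apply hE measurable_coe.aemeasurable
  have hUn : (⋃ i, c ⁻¹' {i}) = Set.univ := by ext μ; simp
  have hdisj : Pairwise (Function.onFun Disjoint fun i => c ⁻¹' {i}) := by
    intro i j hij
    exact Disjoint.preimage _ (by simpa using hij)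
  have hsum : ∑ i, m i = (ν : Measure Θ) := by
    ext E hE
    rw [Measure.finsetSum_apply, ← hq E hE]
    simp_rw [hm _ E hE]
    rw [← setLIntegral_univ (μ := (q : Measure (ProbabilityMeasure Θ))), ← hUn,
      lintegral_iUnion hC hdisj, tsum_fintype]
  have hle : ∀ i, m i ≤ (ν : Measure Θ) := fun i => by
    rw [← hsum]
    exact Finset.single_le_sum (f := m) (fun _ _ => Measure.zero_le _) (Finset.mem_univ i)
  have hfin : ∀ i, IsFiniteMeasure (m i) := fun i =>
    isFiniteMeasure_of_le _ (hle i)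
  have hac : ∀ i, m i ≪ (ν : Measure Θ) := fun i => Measure.absolutelyContinuous_of_le (hle i)
  refine ⟨fun i θ => ((m i).rnDeriv ν θ).toReal, fun i => Measure.integrable_toReal_rnDeriv,
    fun i θ => ENNReal.toReal_nonneg, ?_, ?_⟩
  · have h1 : (∑ i, (m i).rnDeriv (ν : Measure Θ)) =ᵐ[(ν : Measure Θ)] (1 : Θ → ℝ≥0∞) := by
      have hms : Measurable (∑ i, (m i).rnDeriv (ν : Measure Θ)) := by
        have := Finset.measurable_sum (f := fun i => (m i).rnDeriv (ν : Measure Θ)) Finset.univ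
          fun i _ => Measure.measurable_rnDeriv _ _
        convert this using 1
        ext θ
        simp
      have hE : (ν : Measure Θ).withDensity (∑ i, (m i).rnDeriv (ν : Measure Θ)) =
          (ν : Measure Θ).withDensity 1 := by
        rw [withDensity_one]
        ext E hE
        rw [withDensity_apply _ hE]
        simp only [Finset.sum_apply]
        rw [lintegral_finsetSum _ (fun i _ => Measure.measurable_rnDeriv _ _)]
        conv_rhs => rw [← hsum, Measure.finsetSum_apply]
        refine Finset.sum_congr rfl fun i _ => ?_
        rw [← withDensity_apply _ hE, Measure.withDensity_rnDeriv_eq _ _ (hac i)]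
      refine (withDensity_eq_iff hms.aemeasurable measurable_one.aemeasurable ?_).1 hE
      rw [← setLIntegral_univ, ← withDensity_apply _ MeasurableSet.univ, hE, withDensity_one]
      simp
    have h2 : ∀ᵐ θ ∂(ν : Measure Θ), ∀ i, (m i).rnDeriv (ν : Measure Θ) θ < ⊤ :=
      ae_all_iff.2 fun i => Measure.rnDeriv_lt_top _ _
    filter_upwards [h1, h2] with θ h1 h2
    rw [← ENNReal.toReal_sum (fun i _ => (h2 i).ne)]
    simp only [Finset.sum_apply, Pi.one_apply] at h1
    rw [h1]; simp
  · intro i u b hu hb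
    rw [integral_toReal_rnDeriv_mul (hac i)]
    exact integral_bind_pm _ _ measurable_coe (fun μ => inferInstance) hu hb

/-- real version of a finite experiment built from arbitrary functions -/
noncomputable def expR {n : ℕ} (x : Fin n → ℝ) : Option (Fin n) → ℝ
  | some i => max (x i) 0 / max 1 (∑ j, max (x j) 0)
  | none => 1 - ∑ i, max (x i) 0 / max 1 (∑ j, max (x j) 0)

lemma expR_sum {n : ℕ} (x : Fin n → ℝ) : ∑ i, expR x i = 1 := by
  rw [Fintype.sum_option]; simp [expR]

lemma expR_nonneg {n : ℕ} (x : Fin n → ℝ) (i) : 0 ≤ expR x i := by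
  have h1 : (0:ℝ) < max 1 (∑ j, max (x j) 0) := lt_of_lt_of_le one_pos (le_max_left _ _)
  cases i with
  | some i => exact div_nonneg (le_max_right _ _) h1.le
  | none =>
    simp only [expR]
    rw [← Finset.sum_div, sub_nonneg, div_le_one h1]
    exact le_max_right _ _

lemma expR_le_one {n : ℕ} (x : Fin n → ℝ) (i) : expR x i ≤ 1 := by
  rw [← expR_sum x]
  exact Finset.single_le_sum (fun j _ => expR_nonneg x j) (Finset.mem_univ i)

lemma expR_err {n : ℕ} (x g : Fin n → ℝ) (hg : ∀ i, 0 ≤ g i) (h1 : ∑ i, g i = 1) :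
    |expR x none - 0| + ∑ i, |expR x (some i) - g i| ≤ 3 * ∑ i, |x i - g i| := by
  set f : Fin n → ℝ := fun i => max (x i) 0 with hf
  have hf0 : ∀ i, 0 ≤ f i := fun i => le_max_right _ _
  have hfg : ∑ i, |f i - g i| ≤ ∑ i, |x i - g i| := by
    refine Finset.sum_le_sum fun i _ => ?_
    have := abs_max_sub_max_le_abs (x i) (g i) 0
    rwa [max_eq_left (hg i)] at this
  have hS : |∑ i, f i - 1| ≤ ∑ i, |f i - g i| := by
    rw [← h1, ← Finset.sum_sub_distrib]
    exact Finset.abs_sum_le_sum_abs _ _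
  rw [sub_zero, abs_of_nonneg (expR_nonneg x none)]
  have hsome : ∀ i, expR x (some i) = f i / max 1 (∑ j, f j) := fun i => rfl
  have hnone : expR x none = 1 - (∑ j, f j) / max 1 (∑ j, f j) := by
    rw [Finset.sum_div]; rfl
  rw [hnone]
  simp_rw [hsome]
  rcases le_total (∑ j, f j) 1 with h | h
  · rw [max_eq_left h]
    simp only [div_one]
    have := (abs_le.1 hS).1
    have : 0 ≤ ∑ i, |f i - g i| := Finset.sum_nonneg fun i _ => abs_nonneg _
    linarith
  · rw [max_eq_right h, div_self (by linarith)]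
    have h2 : ∑ i, |f i / (∑ j, f j) - g i| ≤ ∑ i, ((f i - f i / ∑ j, f j) + |f i - g i|) := by
      refine Finset.sum_le_sum fun i _ => ?_
      have h3 : f i / (∑ j, f j) ≤ f i := div_le_self (hf0 i) h
      have h4 := abs_sub_le (f i / (∑ j, f j)) (f i) (g i)
      rw [abs_sub_comm (f i / (∑ j, f j)) (f i), abs_of_nonneg (sub_nonneg.2 h3)] at h4
      linarith
    rw [Finset.sum_add_distrib, Finset.sum_sub_distrib, ← Finset.sum_div, div_self (by linarith)] at h2
    have := (abs_le.1 hS).2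
    have : 0 ≤ ∑ i, |f i - g i| := Finset.sum_nonneg fun i _ => abs_nonneg _
    linarith

/-- the experiment generated by continuous functions -/
noncomputable def expE {n : ℕ} [TopologicalSpace Θ] (φ : Fin n → C(Θ, ℝ)) (i : Option (Fin n))
    (θ : Θ) : ℝ≥0∞ := ENNReal.ofReal (expR (fun j => φ j θ) i)

lemma measurable_expR {n : ℕ} [TopologicalSpace Θ] [BorelSpace Θ] (φ : Fin n → C(Θ, ℝ))
    (i : Option (Fin n)) : Measurable fun θ => expR (fun j => φ j θ) i := by
  have h : ∀ j, Measurable (φ j) := fun j => (φ j).continuous.measurable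
  cases i with
  | some i => simp only [expR]; fun_prop
  | none => simp only [expR]; fun_prop

lemma measurable_expE {n : ℕ} [TopologicalSpace Θ] [BorelSpace Θ] (φ : Fin n → C(Θ, ℝ))
    (i : Option (Fin n)) : Measurable (expE φ i) := (measurable_expR φ i).ennreal_ofReal

lemma expE_sum {n : ℕ} [TopologicalSpace Θ] (φ : Fin n → C(Θ, ℝ)) (θ : Θ) :
    ∑ i, expE φ i θ = 1 := by
  unfold expE
  rw [← ENNReal.ofReal_sum_of_nonneg (fun i _ => expR_nonneg _ i), expR_sum]; simp

lemma expE_le {n : ℕ} [TopologicalSpace Θ] (φ : Fin n → C(Θ, ℝ)) (i) (θ : Θ) :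
    expE φ i θ ≤ 1 := by
  unfold expE
  rw [ENNReal.ofReal_le_one]; exact expR_le_one _ _

/-- penalized value of a belief -/
noncomputable def WW {A : Type*} (uS uR : A → Θ → ℝ) (d : ℕ → A) (k : ℝ)
    (μ : ProbabilityMeasure Θ) : ℝ :=
  Wf k (fun n => ∫ θ, uS (d n) θ ∂(μ : Measure Θ)) (fun n => ∫ θ, uR (d n) θ ∂(μ : Measure Θ))

lemma measurable_WW {A : Type*} {uS uR : A → Θ → ℝ} {b : ℝ}
    (hSm : ∀ a, Measurable (uS a)) (hRm : ∀ a, Measurable (uR a))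
    (hSb : ∀ a θ, |uS a θ| ≤ b) (hRb : ∀ a θ, |uR a θ| ≤ b) (d : ℕ → A) (k : ℝ) :
    Measurable (WW uS uR d k) := by
  have h1 : ∀ n, Measurable fun μ : ProbabilityMeasure Θ => ∫ θ, uS (d n) θ ∂(μ : Measure Θ) :=
    fun n => measurable_integral_pm (hSm _) (hSb _)
  have h2 : ∀ n, Measurable fun μ : ProbabilityMeasure Θ => ∫ θ, uR (d n) θ ∂(μ : Measure Θ) :=
    fun n => measurable_integral_pm (hRm _) (hRb _)
  unfold WW Wf
  refine Measurable.iInf fun n => (h1 n).add (Measurable.const_mul ?_ k)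
  exact (Measurable.iSup h2).sub (h2 n)

lemma abs_WW_le {A : Type*} {uS uR : A → Θ → ℝ} {b : ℝ}
    (hSb : ∀ a θ, |uS a θ| ≤ b) (hRb : ∀ a θ, |uR a θ| ≤ b) (d : ℕ → A) {k : ℝ} (hk : 0 ≤ k)
    (μ : ProbabilityMeasure Θ) : |WW uS uR d k μ| ≤ b + k * (2 * b) := by
  have hs : ∀ n, |∫ θ, uS (d n) θ ∂(μ : Measure Θ)| ≤ b := fun n => abs_integral_pm_le (hSb _) _
  have hr : ∀ n, |∫ θ, uR (d n) θ ∂(μ : Measure Θ)| ≤ b := fun n => abs_integral_pm_le (hRb _) _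
  have hb0 : 0 ≤ b := (abs_nonneg _).trans (hs 0)
  have h1 : -b ≤ WW uS uR d k μ := Wf_ge hk hs hr
  have h2 : WW uS uR d k μ ≤ _ := ciInf_le (Wf_bddBelow hk hs hr) 0
  have h3 : (⨆ n, ∫ θ, uR (d n) θ ∂(μ : Measure Θ)) ≤ b := ciSup_le fun n => (abs_le.1 (hr n)).2
  have h4 := abs_le.1 (hr 0)
  have h5 := abs_le.1 (hs 0)
  have h6 := mul_le_mul_of_nonneg_left
    (show (⨆ n, ∫ θ, uR (d n) θ ∂(μ : Measure Θ)) - ∫ θ, uR (d 0) θ ∂(μ : Measure Θ) ≤ 2 * b by linarith) hk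
  have h7 : 0 ≤ k * (2 * b) := by positivity
  rw [abs_le]
  constructor <;> linarith

lemma post_WW {A : Type*} (uS uR : A → Θ → ℝ) (d : ℕ → A) (k : ℝ) {φ : Θ → ℝ≥0∞}
    (hφ : Measurable φ) (h1 : ∀ θ, φ θ ≤ 1) (ν : ProbabilityMeasure Θ) :
    (∫⁻ θ, φ θ ∂(ν : Measure Θ)).toReal * WW uS uR d k (post φ ν) =
    Wf k (fun n => ∫ θ, (φ θ).toReal * uS (d n) θ ∂(ν : Measure Θ))
      (fun n => ∫ θ, (φ θ).toReal * uR (d n) θ ∂(ν : Measure Θ)) := by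
  unfold WW
  rw [← Wf_smul ENNReal.toReal_nonneg]
  have : ∀ u : Θ → ℝ, (∫⁻ θ, φ θ ∂(ν : Measure Θ)).toReal * ∫ θ, u θ ∂(post φ ν : Measure Θ) =
      ∫ θ, (φ θ).toReal * u θ ∂(ν : Measure Θ) := fun u => by
    rw [← smul_eq_mul, ← integral_smul_measure, smul_post hφ h1,
      integral_withDensity_eq_integral_toReal_smul hφ
        (ae_of_all _ fun θ => (h1 θ).trans_lt ENNReal.one_lt_top)]
    rfl
  simp_rw [this]

lemma approx_dense [TopologicalSpace Θ] [CompactSpace Θ] [TopologicalSpace.MetrizableSpace Θ]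
    [BorelSpace Θ] (ν : Measure Θ) [IsProbabilityMeasure ν] {g : Θ → ℝ} (hg : Integrable g ν)
    {η : ℝ} (hη : 0 < η) :
    ∃ j, ∫ θ, |TopologicalSpace.denseSeq C(Θ, ℝ) j θ - g θ| ∂ν ≤ η := by
  obtain ⟨f, hf, hfi⟩ := hg.exists_boundedContinuous_integral_sub_le (half_pos hη)
  let F : C(Θ, ℝ) := f.toContinuousMap
  obtain ⟨j, hj⟩ := (TopologicalSpace.denseRange_denseSeq C(Θ, ℝ)).exists_dist_lt F (half_pos hη)
  refine ⟨j, ?_⟩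
  set D := TopologicalSpace.denseSeq C(Θ, ℝ) j
  have hD : Integrable D ν := Integrable.of_bound D.continuous.aestronglyMeasurable ‖D‖
    (ae_of_all _ fun θ => D.norm_coe_le_norm θ)
  calc ∫ θ, |D θ - g θ| ∂ν ≤ ∫ θ, (η / 2 + ‖g θ - f θ‖) ∂ν := by
        refine integral_mono (hD.sub hg).abs ((integrable_const _).add (hg.sub hfi).norm) fun θ => ?_
        have h1 := ContinuousMap.dist_apply_le_dist (f := F) (g := D) θ
        rw [Real.dist_eq] at h1
        have h2 : F θ = f θ := rfl
        rw [h2] at h1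
        have h3 := abs_sub_le (D θ) (f θ) (g θ)
        rw [abs_sub_comm (D θ) (f θ), abs_sub_comm (f θ) (g θ)] at h3
        show |D θ - g θ| ≤ η / 2 + ‖g θ - f θ‖
        rw [Real.norm_eq_abs]
        linarith
    _ = η / 2 + ∫ θ, ‖g θ - f θ‖ ∂ν := by
        have hi : Integrable (fun θ => ‖g θ - f θ‖) ν := (hg.sub hfi).norm
        rw [integral_add (integrable_const _) hi]; simp
    _ ≤ η := by linarith

lemma approx {A : Type*} [TopologicalSpace A] [CompactSpace A]
    [TopologicalSpace Θ] [CompactSpace Θ] [TopologicalSpace.MetrizableSpace Θ] [BorelSpace Θ]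
    (uS uR : A → Θ → ℝ) (hS : Continuous fun p : A × Θ => uS p.1 p.2)
    (hR : Continuous fun p : A × Θ => uR p.1 p.2) {b : ℝ} (hb0 : 0 ≤ b)
    (hSb : ∀ a θ, |uS a θ| ≤ b) (hRb : ∀ a θ, |uR a θ| ≤ b) (d : ℕ → A) {k : ℝ} (hk : 0 ≤ k)
    (ν : ProbabilityMeasure Θ) (q : ProbabilityMeasure (ProbabilityMeasure Θ))
    (hq : q ∈ infoPolicies ν) {ε : ℝ} (hε : 0 < ε) :
    ∃ J : Σ n : ℕ, (Fin n → ℕ), ∫ μ, WW uS uR d k μ ∂(q : Measure (ProbabilityMeasure Θ)) - ε ≤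
      ∫ μ, WW uS uR d k μ ∂(kap (expE fun i => TopologicalSpace.denseSeq C(Θ, ℝ) (J.2 i)) ν) := by
  have hSm : ∀ a, Measurable (uS a) := fun a => (hS.comp (Continuous.prodMk_right a)).measurable
  have hRm : ∀ a, Measurable (uR a) := fun a => (hR.comp (Continuous.prodMk_right a)).measurable
  set K : ℝ := 1 + 2 * k with hK
  have hKpos : 0 < K := by positivity
  obtain ⟨n, c, hc, hcell⟩ := cells2 uS uR hS hR hSb hRb (δ := ε / (4 * K)) (by positivity)
  set δ : ℝ := ε / (4 * K) with hδ
  have hδK : K * δ = ε / 4 := by rw [hδ]; field_simp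
  obtain ⟨g, hgi, hg0, hg1, hgu⟩ := densities ν q hq c hc
  set η : ℝ := ε / (6 * K * (b + 1) * (n + 1)) with hη
  have hηpos : 0 < η := by positivity
  choose j hj using fun i => approx_dense (ν : Measure Θ) (hgi i) hηpos
  refine ⟨⟨n, j⟩, ?_⟩
  set φ : Fin n → C(Θ, ℝ) := fun i => TopologicalSpace.denseSeq C(Θ, ℝ) (j i) with hφ
  have hWm := measurable_WW hSm hRm hSb hRb d k
  have hWb := abs_WW_le hSb hRb d hk
  have hrhs : ∫ μ, WW uS uR d k μ ∂(kap (expE φ) ν) = ∑ i, Wf k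
      (fun m => ∫ θ, expR (fun j => φ j θ) i * uS (d m) θ ∂(ν : Measure Θ))
      (fun m => ∫ θ, expR (fun j => φ j θ) i * uR (d m) θ ∂(ν : Measure Θ)) := by
    rw [integral_kap (expE_le φ) ν hWm hWb]
    refine Finset.sum_congr rfl fun i _ => ?_
    rw [post_WW _ _ _ _ (measurable_expE φ i) (expE_le φ i)]
    simp only [expE, ENNReal.toReal_ofReal (expR_nonneg _ _)]
  show _ ≤ ∫ μ, WW uS uR d k μ ∂(kap (expE φ) ν)
  rw [hrhs]
  -- target densities
  let G : Option (Fin n) → Θ → ℝ := fun i θ => i.elim 0 (fun i => g i θ)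
  have hGi : ∀ i, Integrable (G i) (ν : Measure Θ) := fun i => by
    cases i with
    | none => exact integrable_zero _ _ _
    | some i => exact hgi i
  have hG0 : ∀ i θ, 0 ≤ G i θ := fun i θ => by
    cases i with
    | none => exact le_rfl
    | some i => exact hg0 i θ
  have hGs : ∀ᵐ θ ∂(ν : Measure Θ), ∑ i, G i θ = 1 := by
    filter_upwards [hg1] with θ hθ
    rw [Fintype.sum_option]
    simpa [G] using hθ
  have hPi : ∀ i, Integrable (fun θ => expR (fun j => φ j θ) i) (ν : Measure Θ) := fun i =>
    Integrable.of_bound (measurable_expR φ i).aestronglyMeasurable 1 (ae_of_all _ fun θ => by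
      rw [Real.norm_eq_abs, abs_of_nonneg (expR_nonneg _ _)]; exact expR_le_one _ _)
  let e : Option (Fin n) → ℝ := fun i => ∫ θ, |expR (fun j => φ j θ) i - G i θ| ∂(ν : Measure Θ)
  have hφi : ∀ i, Integrable (φ i) (ν : Measure Θ) := fun i =>
    Integrable.of_bound (φ i).continuous.aestronglyMeasurable ‖φ i‖
      (ae_of_all _ fun θ => (φ i).norm_coe_le_norm θ)
  have hi1 : ∀ i, Integrable (fun θ => |expR (fun j => φ j θ) i - G i θ|) (ν : Measure Θ) :=
    fun i => ((hPi i).sub (hGi i)).abs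
  have hi2 : ∀ i, Integrable (fun θ => |φ i θ - g i θ|) (ν : Measure Θ) :=
    fun i => ((hφi i).sub (hgi i)).abs
  have hesum : ∑ i, e i ≤ 3 * (n * η) := by
    calc ∑ i, e i = ∫ θ, ∑ i, |expR (fun j => φ j θ) i - G i θ| ∂(ν : Measure Θ) := by
          rw [integral_finsetSum _ fun i _ => hi1 i]
      _ ≤ ∫ θ, 3 * ∑ i, |φ i θ - g i θ| ∂(ν : Measure Θ) := by
          refine integral_mono_ae (integrable_finsetSum _ fun i _ => hi1 i)
            (Integrable.const_mul (integrable_finsetSum _ fun i _ => hi2 i) _) ?_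
          filter_upwards [hg1] with θ hθ
          rw [Fintype.sum_option]
          exact expR_err (fun j => φ j θ) (fun j => g j θ) (fun i => hg0 i θ) hθ
      _ = 3 * ∑ i, ∫ θ, |φ i θ - g i θ| ∂(ν : Measure Θ) := by
          rw [integral_const_mul, integral_finsetSum _ fun i _ => hi2 i]
      _ ≤ 3 * ∑ i : Fin n, η := by
          gcongr with i
          exact hj i
      _ = 3 * (n * η) := by simp
  have hbdP : ∀ (H : Θ → ℝ), Integrable H (ν : Measure Θ) → (∀ᵐ θ ∂(ν : Measure Θ), |H θ| ≤ 1) →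
      ∀ u : Θ → ℝ, (∀ θ, |u θ| ≤ b) →
      |∫ θ, H θ * u θ ∂(ν : Measure Θ)| ≤ b := by
    intro H _ hH u hu
    have := norm_integral_le_of_norm_le_const (μ := (ν : Measure Θ)) (f := fun θ => H θ * u θ)
      (C := b) (by
        filter_upwards [hH] with θ hθ
        rw [Real.norm_eq_abs, abs_mul]
        calc |H θ| * |u θ| ≤ 1 * b := mul_le_mul hθ (hu θ) (abs_nonneg _) zero_le_one
          _ = b := one_mul b)
    simpa using this
  have hP1 : ∀ i, ∀ᵐ θ ∂(ν : Measure Θ), |expR (fun j => φ j θ) i| ≤ 1 := fun i =>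
    ae_of_all _ fun θ => by rw [abs_of_nonneg (expR_nonneg _ _)]; exact expR_le_one _ _
  have hG1 : ∀ i, ∀ᵐ θ ∂(ν : Measure Θ), |G i θ| ≤ 1 := fun i => by
    filter_upwards [hGs] with θ hθ
    rw [abs_of_nonneg (hG0 _ _), ← hθ]
    exact Finset.single_le_sum (f := fun i => G i θ) (fun j _ => hG0 j θ) (Finset.mem_univ i)
  have hdiff : ∀ i (u : Θ → ℝ), Measurable u → (∀ θ, |u θ| ≤ b) →
      |∫ θ, G i θ * u θ ∂(ν : Measure Θ) - ∫ θ, expR (fun j => φ j θ) i * u θ ∂(ν : Measure Θ)| ≤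
        b * e i := by
    intro i u hum hu
    have i1 : Integrable (fun θ => G i θ * u θ) (ν : Measure Θ) :=
      (hGi i).mul_bdd hum.aestronglyMeasurable (ae_of_all _ hu)
    have i2 : Integrable (fun θ => expR (fun j => φ j θ) i * u θ) (ν : Measure Θ) :=
      (hPi i).mul_bdd hum.aestronglyMeasurable (ae_of_all _ hu)
    rw [← integral_sub i1 i2, ← integral_const_mul]
    refine (abs_integral_le_integral_abs).trans ?_
    refine integral_mono (i1.sub i2).abs (((hPi i).sub (hGi i)).abs.const_mul b) fun θ => ?_
    show |G i θ * u θ - expR (fun j => φ j θ) i * u θ| ≤ b * |expR (fun j => φ j θ) i - G i θ|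
    rw [← sub_mul, abs_mul, mul_comm, abs_sub_comm]
    exact mul_le_mul_of_nonneg_right (hu θ) (abs_nonneg _)
  let GW : Option (Fin n) → ℝ := fun i => Wf k
      (fun m => ∫ θ, G i θ * uS (d m) θ ∂(ν : Measure Θ))
      (fun m => ∫ θ, G i θ * uR (d m) θ ∂(ν : Measure Θ))
  have hstep : ∀ i, GW i - K * (b * e i) ≤ Wf k
      (fun m => ∫ θ, expR (fun j => φ j θ) i * uS (d m) θ ∂(ν : Measure Θ))
      (fun m => ∫ θ, expR (fun j => φ j θ) i * uR (d m) θ ∂(ν : Measure Θ)) := by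
    intro i
    rw [sub_le_iff_le_add]
    exact Wf_lip (b := b) hk (fun m => hbdP _ (hGi i) (hG1 i) _ (hSb _))
      (fun m => hbdP _ (hGi i) (hG1 i) _ (hRb _)) (fun m => hbdP _ (hPi i) (hP1 i) _ (hRb _))
      (fun m => hdiff i _ (hSm _) (hSb _)) (fun m => hdiff i _ (hRm _) (hRb _))
  have hGWnone : GW none = 0 := by
    have : GW none = Wf k (fun n => (0:ℝ) * (0:ℝ)) (fun n => (0:ℝ) * (0:ℝ)) := by
      simp [GW, G]
    rw [this, Wf_smul le_rfl, zero_mul]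
  have hWi : Integrable (WW uS uR d k) (q : Measure (ProbabilityMeasure Θ)) :=
    Integrable.of_bound hWm.aestronglyMeasurable _ (ae_of_all _ hWb)
  have hC : ∀ i, MeasurableSet (c ⁻¹' {i}) := fun i => hc (measurableSet_singleton i)
  have hGWsome : ∀ i, ∫ μ in c ⁻¹' {i}, (WW uS uR d k μ - 2 * K * δ)
      ∂(q : Measure (ProbabilityMeasure Θ)) ≤ GW (some i) := by
    intro i
    have hGW : GW (some i) = Wf k
        (fun m => ∫ μ in c ⁻¹' {i}, (∫ θ, uS (d m) θ ∂(μ : Measure Θ)) ∂(q : Measure (ProbabilityMeasure Θ)))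
        (fun m => ∫ μ in c ⁻¹' {i}, (∫ θ, uR (d m) θ ∂(μ : Measure Θ)) ∂(q : Measure (ProbabilityMeasure Θ))) := by
      simp only [GW, G, Option.elim]
      simp_rw [fun m => hgu i (uS (d m)) b (hSm _) (hSb _), fun m => hgu i (uR (d m)) b (hRm _) (hRb _)]
    rcases Set.eq_empty_or_nonempty (c ⁻¹' {i}) with he | ⟨μi, hμi⟩
    · rw [hGW, he]
      simp only [Measure.restrict_empty, integral_zero_measure]
      have := Wf_smul (k := k) (c := 0) le_rfl (fun _ => 0) (fun _ => 0)
      simp only [zero_mul] at this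
      rw [this]
    · set Q : ℝ := (q : Measure (ProbabilityMeasure Θ)).real (c ⁻¹' {i}) with hQ
      have hQ0 : 0 ≤ Q := measureReal_nonneg
      have hQ1 : Q ≤ 1 := measureReal_le_one
      have hcc : ∀ μ ∈ c ⁻¹' {i}, c μ = c μi := fun μ hμ => by
        rw [Set.mem_preimage, Set.mem_singleton_iff] at hμ hμi
        rw [hμ, hμi]
      have hUint : ∀ u : Θ → ℝ, Measurable u → (∀ θ, |u θ| ≤ b) →
          Integrable (fun μ : ProbabilityMeasure Θ => ∫ θ, u θ ∂(μ : Measure Θ))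
            ((q : Measure (ProbabilityMeasure Θ)).restrict (c ⁻¹' {i})) := fun u hum hu =>
        Integrable.of_bound (measurable_integral_pm hum hu).aestronglyMeasurable b
          (ae_of_all _ fun μ => abs_integral_pm_le hu _)
      have hUbd : ∀ u : Θ → ℝ, Measurable u → (∀ θ, |u θ| ≤ b) →
          |∫ μ in c ⁻¹' {i}, (∫ θ, u θ ∂(μ : Measure Θ)) ∂(q : Measure (ProbabilityMeasure Θ))| ≤ b := by
        intro u hum hu
        have := norm_setIntegral_le_of_norm_le_const (μ := (q : Measure (ProbabilityMeasure Θ)))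
          (s := c ⁻¹' {i}) (f := fun μ : ProbabilityMeasure Θ => ∫ θ, u θ ∂(μ : Measure Θ)) (C := b)
          (measure_lt_top _ _) (fun μ _ => abs_integral_pm_le hu _)
        rw [Real.norm_eq_abs] at this
        nlinarith
      have hQbd : ∀ u : Θ → ℝ, (∀ θ, |u θ| ≤ b) → |Q * ∫ θ, u θ ∂(μi : Measure Θ)| ≤ b := by
        intro u hu
        rw [abs_mul, abs_of_nonneg hQ0]
        have := abs_integral_pm_le hu (μi : Measure Θ)
        nlinarith [abs_nonneg (∫ θ, u θ ∂(μi : Measure Θ))]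
      have hcmp : ∀ u : Θ → ℝ, Measurable u → (∀ θ, |u θ| ≤ b) →
          (∀ μ ∈ c ⁻¹' {i}, |∫ θ, u θ ∂(μi : Measure Θ) - ∫ θ, u θ ∂(μ : Measure Θ)| ≤ δ) →
          |Q * (∫ θ, u θ ∂(μi : Measure Θ)) - ∫ μ in c ⁻¹' {i}, (∫ θ, u θ ∂(μ : Measure Θ))
            ∂(q : Measure (ProbabilityMeasure Θ))| ≤ δ * Q := by
        intro u hum hu hd
        have e1 : Q * (∫ θ, u θ ∂(μi : Measure Θ)) = ∫ μ in c ⁻¹' {i}, (∫ θ, u θ ∂(μi : Measure Θ))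
            ∂(q : Measure (ProbabilityMeasure Θ)) := by
          rw [setIntegral_const, smul_eq_mul]
        rw [e1, ← integral_sub (integrable_const _) (hUint u hum hu)]
        rw [← Real.norm_eq_abs]
        exact norm_setIntegral_le_of_norm_le_const
          (f := fun μ : ProbabilityMeasure Θ => ∫ θ, u θ ∂(μi : Measure Θ) - ∫ θ, u θ ∂(μ : Measure Θ))
          (C := δ) (measure_lt_top _ _) (fun μ hμ => hd μ hμ)
      have h1 : Q * WW uS uR d k μi ≤ GW (some i) + K * (δ * Q) := by
        rw [hGW]
        unfold WW
        rw [← Wf_smul hQ0]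
        exact Wf_lip (b := b) hk (fun m => hQbd _ (hSb _)) (fun m => hQbd _ (hRb _))
          (fun m => hUbd _ (hRm _) (hRb _))
          (fun m => hcmp _ (hSm _) (hSb _) fun μ hμ => (hcell _ _ (hcc μ hμ).symm (d m)).1)
          (fun m => hcmp _ (hRm _) (hRb _) fun μ hμ => (hcell _ _ (hcc μ hμ).symm (d m)).2)
      have h2 : ∫ μ in c ⁻¹' {i}, (WW uS uR d k μ - 2 * K * δ) ∂(q : Measure (ProbabilityMeasure Θ)) ≤
          ∫ μ in c ⁻¹' {i}, (WW uS uR d k μi - K * δ) ∂(q : Measure (ProbabilityMeasure Θ)) := by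
        refine setIntegral_mono_on (hWi.sub (integrable_const _)).integrableOn
          (integrable_const _).integrableOn (hC i) fun μ hμ => ?_
        have : WW uS uR d k μ ≤ WW uS uR d k μi + K * δ :=
          Wf_lip (b := b) hk (fun m => abs_integral_pm_le (hSb _) _)
            (fun m => abs_integral_pm_le (hRb _) _) (fun m => abs_integral_pm_le (hRb _) _)
            (fun m => (hcell _ _ (hcc μ hμ) (d m)).1) (fun m => (hcell _ _ (hcc μ hμ) (d m)).2)
        linarith
      rw [setIntegral_const, smul_eq_mul] at h2
      have h3 : Q * (WW uS uR d k μi - K * δ) = Q * WW uS uR d k μi - K * (δ * Q) := by ring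
      rw [← hQ, h3] at h2
      linarith
  have hUn : (⋃ i, c ⁻¹' {i}) = Set.univ := by ext μ; simp
  have hdisj : Pairwise (Function.onFun Disjoint fun i => c ⁻¹' {i}) := by
    intro i j hij
    exact Disjoint.preimage _ (by simpa using hij)
  have htot : ∑ i, ∫ μ in c ⁻¹' {i}, (WW uS uR d k μ - 2 * K * δ)
      ∂(q : Measure (ProbabilityMeasure Θ)) =
      ∫ μ, WW uS uR d k μ ∂(q : Measure (ProbabilityMeasure Θ)) - 2 * K * δ := by
    have hWi2 : Integrable (fun μ => WW uS uR d k μ - 2 * K * δ)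
        (q : Measure (ProbabilityMeasure Θ)) := hWi.sub (integrable_const _)
    rw [← integral_iUnion_fintype hC hdisj (fun i => hWi2.integrableOn), hUn, setIntegral_univ,
      integral_sub hWi (integrable_const _)]
    simp
  have hA : ∑ i, (GW i - K * (b * e i)) ≤ ∑ i, Wf k
      (fun m => ∫ θ, expR (fun j => φ j θ) i * uS (d m) θ ∂(ν : Measure Θ))
      (fun m => ∫ θ, expR (fun j => φ j θ) i * uR (d m) θ ∂(ν : Measure Θ)) :=
    Finset.sum_le_sum fun i _ => hstep i
  have hB : ∑ i, (GW i - K * (b * e i)) = ∑ i, GW i - K * (b * ∑ i, e i) := by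
    rw [Finset.sum_sub_distrib, Finset.mul_sum, Finset.mul_sum]
  have hCC : ∫ μ, WW uS uR d k μ ∂(q : Measure (ProbabilityMeasure Θ)) - 2 * K * δ ≤ ∑ i, GW i := by
    rw [Fintype.sum_option, hGWnone, zero_add, ← htot]
    exact Finset.sum_le_sum fun i _ => hGWsome i
  have hD : K * (b * ∑ i, e i) ≤ ε / 2 := by
    have e1 : K * (b * ∑ i, e i) ≤ K * (b * (3 * (n * η))) := by gcongr
    have e2 : K * (b * (3 * (n * η))) ≤ K * ((b + 1) * (3 * ((n + 1) * η))) := by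
      gcongr <;> linarith
    have e3 : K * ((b + 1) * (3 * ((n + 1) * η))) = ε / 2 := by
      rw [hη]; field_simp; norm_num
    linarith
  linarith


lemma mix {mubar ν : ProbabilityMeasure Θ} {ε : ℝ} (h0 : 0 < ε) (h1 : ε < 1)
    (hle : ∀ E, MeasurableSet E → ENNReal.ofReal (1 - ε) * (ν : Measure Θ) E ≤ (mubar : Measure Θ) E)
    {q : ProbabilityMeasure (ProbabilityMeasure Θ)} (hq : q ∈ infoPolicies ν)
    {w : ProbabilityMeasure Θ → ℝ} (hw : Measurable w) {b : ℝ} (hwb : ∀ μ, |w μ| ≤ b) :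
    ∃ q' ∈ infoPolicies mubar,
      (1 - ε) * ∫ μ, w μ ∂(q : Measure (ProbabilityMeasure Θ)) - ε * b ≤
        ∫ μ, w μ ∂(q' : Measure (ProbabilityMeasure Θ)) := by
  set m : Measure Θ := ENNReal.ofReal (1 - ε) • (ν : Measure Θ) with hm
  have hmf : IsFiniteMeasure m := Measure.smul_finite _ ENNReal.ofReal_ne_top
  have hmle : m ≤ (mubar : Measure Θ) := Measure.le_iff.2 fun E hE => by
    rw [hm, Measure.smul_apply, smul_eq_mul]; exact hle E hE
  set σ : Measure Θ := (mubar : Measure Θ) - m with hσ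
  have hsum : σ + m = (mubar : Measure Θ) := Measure.sub_add_cancel_of_le hmle
  have hone : ENNReal.ofReal (1 - ε) + ENNReal.ofReal ε = 1 := by
    rw [← ENNReal.ofReal_add (by linarith) h0.le]; simp
  have hmu : m Set.univ = ENNReal.ofReal (1 - ε) := by rw [hm]; simp
  have hσu : σ Set.univ = ENNReal.ofReal ε := by
    have := congrArg (fun x : Measure Θ => x Set.univ) hsum
    simp only [Measure.add_apply, hmu, measure_univ] at this
    rw [← hone, add_comm] at this
    exact (ENNReal.add_right_inj ENNReal.ofReal_ne_top).1 this
  have hε0 : ENNReal.ofReal ε ≠ 0 := by simpa using h0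
  have hρp : IsProbabilityMeasure ((ENNReal.ofReal ε)⁻¹ • σ) := ⟨by
    rw [Measure.smul_apply, smul_eq_mul, hσu]
    exact ENNReal.inv_mul_cancel hε0 ENNReal.ofReal_ne_top⟩
  set ρ : ProbabilityMeasure Θ := mkPM _ hρp
  have hρ : ENNReal.ofReal ε • (ρ : Measure Θ) = σ := by
    show ENNReal.ofReal ε • ((ENNReal.ofReal ε)⁻¹ • σ) = σ
    rw [smul_smul, ENNReal.mul_inv_cancel hε0 ENNReal.ofReal_ne_top, one_smul]
  set Q : Measure (ProbabilityMeasure Θ) :=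
    ENNReal.ofReal (1 - ε) • (q : Measure (ProbabilityMeasure Θ)) +
      ENNReal.ofReal ε • Measure.dirac ρ with hQ
  have hQp : IsProbabilityMeasure Q := ⟨by rw [hQ]; simpa using hone⟩
  refine ⟨mkPM Q hQp, ?_, ?_⟩
  · rw [mem_info_iff] at hq ⊢
    intro B hB
    rw [coe_mkPM, hQ, lintegral_add_measure, lintegral_smul_measure, lintegral_smul_measure,
      lintegral_dirac' _ (measurable_eval hB), hq B hB, ← hsum, ← hρ, add_comm]
    rfl
  · have hiq : Integrable w (q : Measure (ProbabilityMeasure Θ)) :=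
      Integrable.of_bound hw.aestronglyMeasurable b (ae_of_all _ hwb)
    have hid : Integrable w (Measure.dirac ρ) :=
      Integrable.of_bound hw.aestronglyMeasurable b (ae_of_all _ hwb)
    rw [coe_mkPM, hQ, integral_add_measure (hiq.smul_measure ENNReal.ofReal_ne_top)
      (hid.smul_measure ENNReal.ofReal_ne_top), integral_smul_measure, integral_smul_measure,
      integral_dirac' _ _ hw.stronglyMeasurable, ENNReal.toReal_ofReal (by linarith),
      ENNReal.toReal_ofReal h0.le, smul_eq_mul, smul_eq_mul]
    have := (abs_le.1 (hwb ρ)).1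
    nlinarith

lemma dirac_mem (ν : ProbabilityMeasure Θ) :
    mkPM (Measure.dirac ν) inferInstance ∈ infoPolicies ν := by
  rw [mem_info_iff]
  intro B hB
  rw [coe_mkPM, lintegral_dirac' _ (measurable_eval hB)]

lemma wFacts {A : Type*} [TopologicalSpace A] [CompactSpace A] [TopologicalSpace.MetrizableSpace A]
    [Nonempty A] [TopologicalSpace Θ] [BorelSpace Θ]
    (uS uR : A → Θ → ℝ) (hS : Continuous fun p : A × Θ => uS p.1 p.2)
    (hR : Continuous fun p : A × Θ => uR p.1 p.2) {b : ℝ}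
    (hSb : ∀ a θ, |uS a θ| ≤ b) (hRb : ∀ a θ, |uR a θ| ≤ b) (d : ℕ → A) (hd : DenseRange d)
    (μ : ProbabilityMeasure Θ) :
    |wFun uS uR μ| ≤ b ∧ (∀ k : ℝ, 0 ≤ k → WW uS uR d k μ ≤ wFun uS uR μ) ∧
      Tendsto (fun k : ℕ => WW uS uR d k μ) atTop (𝓝 (wFun uS uR μ)) := by
  have hc : ∀ u : A → Θ → ℝ, Continuous (fun p : A × Θ => u p.1 p.2) → (∀ a θ, |u a θ| ≤ b) →
      Continuous fun a => ∫ θ, u a θ ∂(μ : Measure Θ) := fun u hu hub =>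
    continuous_of_dominated (bound := fun _ => b)
      (fun a => (hu.comp (Continuous.prodMk_right a)).measurable.aestronglyMeasurable)
      (fun a => ae_of_all _ fun θ => hub a θ) (integrable_const _)
      (ae_of_all _ fun θ => hu.comp (Continuous.prodMk_left θ))
  exact Wf_limit d hd (fun a => ∫ θ, uS a θ ∂(μ : Measure Θ)) (fun a => ∫ θ, uR a θ ∂(μ : Measure Θ))
    (hc _ hS hSb) (hc _ hR hRb) (fun a => abs_integral_pm_le (hSb a) _)
    (fun a => abs_integral_pm_le (hRb a) _)

lemma exists_bound {A : Type*} [TopologicalSpace A] [CompactSpace A]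
    [TopologicalSpace Θ] [CompactSpace Θ]
    (u : A → Θ → ℝ) (hS : Continuous fun p : A × Θ => u p.1 p.2) :
    ∃ b : ℝ, ∀ a θ, |u a θ| ≤ b := by
  obtain ⟨b, hb⟩ := isCompact_univ.exists_bound_of_continuousOn hS.continuousOn
  exact ⟨b, fun a θ => hb (a, θ) (Set.mem_univ _)⟩

lemma near {A : Type*} [TopologicalSpace A] [CompactSpace A] [TopologicalSpace.MetrizableSpace A]
    [Nonempty A] [TopologicalSpace Θ] [CompactSpace Θ] [TopologicalSpace.MetrizableSpace Θ]
    [BorelSpace Θ]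
    (uS uR : A → Θ → ℝ) (hS : Continuous fun p : A × Θ => uS p.1 p.2)
    (hR : Continuous fun p : A × Θ => uR p.1 p.2) {b : ℝ} (hb0 : 0 ≤ b)
    (hSb : ∀ a θ, |uS a θ| ≤ b) (hRb : ∀ a θ, |uR a θ| ≤ b) (d : ℕ → A) (hd : DenseRange d)
    (hwm : Measurable (wFun uS uR))
    (ν : ProbabilityMeasure Θ) (q : ProbabilityMeasure (ProbabilityMeasure Θ))
    (hq : q ∈ infoPolicies ν) {ε : ℝ} (hε : 0 < ε) :
    ∃ J : Σ n : ℕ, (Fin n → ℕ), ∫ μ, wFun uS uR μ ∂(q : Measure (ProbabilityMeasure Θ)) - ε ≤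
      ∫ μ, wFun uS uR μ ∂(kap (expE fun i => TopologicalSpace.denseSeq C(Θ, ℝ) (J.2 i)) ν) := by
  have hSm : ∀ a, Measurable (uS a) := fun a => (hS.comp (Continuous.prodMk_right a)).measurable
  have hRm : ∀ a, Measurable (uR a) := fun a => (hR.comp (Continuous.prodMk_right a)).measurable
  have hF := wFacts uS uR hS hR hSb hRb d hd
  have hlim : Tendsto (fun k : ℕ => ∫ μ, WW uS uR d k μ ∂(q : Measure (ProbabilityMeasure Θ))) atTop
      (𝓝 (∫ μ, wFun uS uR μ ∂(q : Measure (ProbabilityMeasure Θ)))) := by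
    refine tendsto_integral_of_dominated_convergence (fun _ => b)
      (fun k => (measurable_WW hSm hRm hSb hRb d k).aestronglyMeasurable) (integrable_const _)
      (fun k => ae_of_all _ fun μ => ?_) (ae_of_all _ fun μ => (hF μ).2.2)
    rw [Real.norm_eq_abs, abs_le]
    refine ⟨Wf_ge (Nat.cast_nonneg k) (fun m => abs_integral_pm_le (hSb _) _)
      (fun m => abs_integral_pm_le (hRb _) _), ?_⟩
    exact ((hF μ).2.1 k (Nat.cast_nonneg k)).trans (abs_le.1 (hF μ).1).2
  obtain ⟨k, hk⟩ := (hlim.eventually (lt_mem_nhds (sub_lt_self _ (half_pos hε)))).exists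
  obtain ⟨J, hJ⟩ := approx uS uR hS hR hb0 hSb hRb d (Nat.cast_nonneg k) ν q hq (half_pos hε)
  refine ⟨J, ?_⟩
  have := kap_prob (measurable_expE fun i => TopologicalSpace.denseSeq C(Θ, ℝ) (J.2 i))
    (expE_sum _) ν
  have hmono : ∫ μ, WW uS uR d k μ ∂(kap (expE fun i => TopologicalSpace.denseSeq C(Θ, ℝ) (J.2 i)) ν) ≤
      ∫ μ, wFun uS uR μ ∂(kap (expE fun i => TopologicalSpace.denseSeq C(Θ, ℝ) (J.2 i)) ν) := by
    refine integral_mono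
      (Integrable.of_bound (measurable_WW hSm hRm hSb hRb d k).aestronglyMeasurable _
        (ae_of_all _ (abs_WW_le hSb hRb d (Nat.cast_nonneg k))))
      (Integrable.of_bound hwm.aestronglyMeasurable b (ae_of_all _ fun μ => (hF μ).1)) fun μ => ?_
    exact (hF μ).2.1 k (Nat.cast_nonneg k)
  linarith

/-- at the perturbed prior a near-optimal policy can be transported to `mubar` -/
lemma transport {w : ProbabilityMeasure Θ → ℝ} (hw : Measurable w) {b : ℝ} (hb0 : 0 ≤ b)
    (hwb : ∀ μ, |w μ| ≤ b)
    {mubar μ : ProbabilityMeasure Θ} {γ : ℝ} (hγ : 0 < γ) (hle : scaledLE γ μ mubar) {c C : ℝ}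
    (hC : |c| ≤ C)
    {lam0 : ℝ} (hl0 : 0 < lam0) (hl1 : lam0 ≤ 1)
    (h : ∀ lam : ℝ, 0 < lam → lam ≤ lam0 →
        ∀ ν : ProbabilityMeasure Θ,
          (ν : Measure Θ) = ENNReal.ofReal lam • (μ : Measure Θ) +
            ENNReal.ofReal (1 - lam) • (mubar : Measure Θ) →
          ∀ c' < c, ∃ q ∈ infoPolicies ν, c' < ∫ μ, w μ ∂(q : Measure (ProbabilityMeasure Θ)))
    {ε : ℝ} (hε : 0 < ε) :
    ∃ q ∈ infoPolicies mubar, c - ε ≤ ∫ μ, w μ ∂(q : Measure (ProbabilityMeasure Θ)) := by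
  have hC0 : 0 ≤ C := (abs_nonneg _).trans hC
  set e : ℝ := min (1 / 2) (ε / (1 + b + C)) with he
  have he0 : 0 < e := by positivity
  have he1 : e < 1 := (min_le_left _ _).trans_lt (by norm_num)
  have hee : e * (1 + b + C) ≤ ε := by
    have : e ≤ ε / (1 + b + C) := min_le_right _ _
    rwa [le_div_iff₀ (by positivity)] at this
  set lam : ℝ := min lam0 (e * γ) with hlam
  have hlam0 : 0 < lam := by positivity
  have hlamle : lam ≤ lam0 := min_le_left _ _
  have hlamle1 : lam ≤ 1 := hlamle.trans hl1
  have hlamγ : lam ≤ e * γ := min_le_right _ _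
  set m : Measure Θ := ENNReal.ofReal lam • (μ : Measure Θ) +
            ENNReal.ofReal (1 - lam) • (mubar : Measure Θ) with hm
  have hmp : IsProbabilityMeasure m := ⟨by
    rw [hm]
    simp only [Measure.add_apply, Measure.smul_apply, measure_univ, smul_eq_mul, mul_one]
    rw [← ENNReal.ofReal_add hlam0.le (by linarith)]; simp⟩
  obtain ⟨q, hq, hqc⟩ := h lam hlam0 hlamle (mkPM m hmp) rfl (c - e) (by linarith)
  have hle' : ∀ E, MeasurableSet E →
      ENNReal.ofReal (1 - e) * ((mkPM m hmp : ProbabilityMeasure Θ) : Measure Θ) E ≤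
        (mubar : Measure Θ) E := by
    intro E hE
    have h1 := hle E hE
    rw [coe_mkPM, hm]
    simp only [Measure.add_apply, Measure.smul_apply, smul_eq_mul]
    have h2 : ENNReal.ofReal lam * (μ : Measure Θ) E ≤ ENNReal.ofReal e * (mubar : Measure Θ) E := by
      calc ENNReal.ofReal lam * (μ : Measure Θ) E
          ≤ ENNReal.ofReal (e * γ) * (μ : Measure Θ) E := by gcongr
        _ = ENNReal.ofReal e * (ENNReal.ofReal γ * (μ : Measure Θ) E) := by
            rw [ENNReal.ofReal_mul he0.le, mul_assoc]
        _ ≤ _ := by gcongr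
    calc ENNReal.ofReal (1 - e) * (ENNReal.ofReal lam * (μ : Measure Θ) E +
            ENNReal.ofReal (1 - lam) * (mubar : Measure Θ) E)
        ≤ ENNReal.ofReal (1 - e) * (ENNReal.ofReal e * (mubar : Measure Θ) E +
            ENNReal.ofReal 1 * (mubar : Measure Θ) E) := by
          gcongr; linarith
      _ = ENNReal.ofReal ((1 - e) * (e + 1)) * (mubar : Measure Θ) E := by
          rw [ENNReal.ofReal_mul (by linarith), ENNReal.ofReal_add he0.le zero_le_one]; ring
      _ ≤ ENNReal.ofReal 1 * (mubar : Measure Θ) E := by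
          gcongr; nlinarith
      _ = (mubar : Measure Θ) E := by simp
  obtain ⟨q', hq', hv⟩ := mix he0 he1 hle' hq hw hwb
  refine ⟨q', hq', ?_⟩
  have h3 := (abs_le.1 hC)
  nlinarith

end LP

/-- If `p ∈ I(μ0)` is supported on a Borel set `D`, `f` is bounded measurable, and each
`mubar ∈ D` admits `μ` and `γ > 0` with `γμ ≤ mubar` such that
`ŵ(λμ + (1−λ)mubar) ≥ f(mubar)` for all sufficiently small `λ ∈ (0,1]`,
then `ŵ(μ0) ≥ ∫ f dp`. -/
theorem wHat_ge_integral_of_local_perturbation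
    {A Θ : Type*}
    [TopologicalSpace A] [CompactSpace A] [TopologicalSpace.MetrizableSpace A] [Nonempty A]
    [MeasurableSpace A] [BorelSpace A]
    [TopologicalSpace Θ] [CompactSpace Θ] [TopologicalSpace.MetrizableSpace Θ] [Nonempty Θ]
    [MeasurableSpace Θ] [BorelSpace Θ]
    (uS uR : A → Θ → ℝ)
    (hS : Continuous fun p : A × Θ => uS p.1 p.2)
    (hR : Continuous fun p : A × Θ => uR p.1 p.2)
    (μ0 : ProbabilityMeasure Θ)
    (D : Set (ProbabilityMeasure Θ)) (hDm : MeasurableSet D)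
    (p : ProbabilityMeasure (ProbabilityMeasure Θ)) (hp : p ∈ infoPolicies μ0)
    (hpD : (p : Measure (ProbabilityMeasure Θ)) D = 1)
    (f : ProbabilityMeasure Θ → ℝ) (hfm : Measurable f) (hfb : ∃ C : ℝ, ∀ μ, |f μ| ≤ C)
    (h : ∀ mubar ∈ D, ∃ (μ : ProbabilityMeasure Θ) (γ : ℝ), 0 < γ ∧ scaledLE γ μ mubar ∧
      ∃ lam0 : ℝ, 0 < lam0 ∧ lam0 ≤ 1 ∧ ∀ lam : ℝ, 0 < lam → lam ≤ lam0 →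
        ∀ ν : ProbabilityMeasure Θ,
          (ν : Measure Θ) = ENNReal.ofReal lam • (μ : Measure Θ) +
            ENNReal.ofReal (1 - lam) • (mubar : Measure Θ) →
          f mubar ≤ wHat uS uR ν) :
    ∫ ν, f ν ∂(p : Measure (ProbabilityMeasure Θ)) ≤ wHat uS uR μ0 := by
  classical
  obtain ⟨b1, hb1⟩ := LP.exists_bound uS hS
  obtain ⟨b2, hb2⟩ := LP.exists_bound uR hR
  obtain ⟨C, hfC⟩ := hfb
  obtain ⟨b, hb0, hbS, hbR⟩ : ∃ b : ℝ, 0 ≤ b ∧ b1 ≤ b ∧ b2 ≤ b :=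
    ⟨max 0 (max b1 b2), by simp, by simp, by simp⟩
  have hSb : ∀ a θ, |uS a θ| ≤ b := fun a θ => (hb1 a θ).trans hbS
  have hRb : ∀ a θ, |uR a θ| ≤ b := fun a θ => (hb2 a θ).trans hbR
  have hSm : ∀ a, Measurable (uS a) := fun a => (hS.comp (Continuous.prodMk_right a)).measurable
  have hRm : ∀ a, Measurable (uR a) := fun a => (hR.comp (Continuous.prodMk_right a)).measurable
  set d : ℕ → A := TopologicalSpace.denseSeq A
  have hd : DenseRange d := TopologicalSpace.denseRange_denseSeq A
  have hF := LP.wFacts uS uR hS hR hSb hRb d hd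
  have hwb : ∀ μ, |wFun uS uR μ| ≤ b := fun μ => (hF μ).1
  have hwm : Measurable (wFun uS uR) :=
    measurable_of_tendsto_metrizable (fun k : ℕ => LP.measurable_WW hSm hRm hSb hRb d k)
      (tendsto_pi_nhds.2 fun μ => (hF μ).2.2)
  have hbdd : ∀ ν : ProbabilityMeasure Θ,
      BddAbove ((fun p : ProbabilityMeasure (ProbabilityMeasure Θ) =>
        ∫ ν, wFun uS uR ν ∂(p : Measure (ProbabilityMeasure Θ))) '' infoPolicies ν) := fun ν =>
    ⟨b, by
      rintro _ ⟨q, -, rfl⟩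
      exact (abs_le.1 (LP.abs_integral_pm_le hwb _)).2⟩
  obtain ⟨J, hJ⟩ := exists_surjective_nat (Σ n : ℕ, (Fin n → ℕ))
  let φ : ∀ j : ℕ, Fin (J j).1 → C(Θ, ℝ) := fun j i =>
    TopologicalSpace.denseSeq C(Θ, ℝ) ((J j).2 i)
  refine le_of_forall_pos_le_add fun ε hε => ?_
  have hfi : Integrable f (p : Measure (ProbabilityMeasure Θ)) :=
    Integrable.of_bound hfm.aestronglyMeasurable C (ae_of_all _ hfC)
  obtain ⟨p', hp', hle⟩ := LP.select μ0 p hp D hDm hpD (fun j => LP.kap (LP.expE (φ j)))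
    (fun j => LP.measurable_kap (LP.measurable_expE (φ j)))
    (fun j ν => LP.kap_prob (LP.measurable_expE (φ j)) (LP.expE_sum (φ j)) ν)
    (fun j ν B hB => LP.kap_bary (LP.measurable_expE (φ j)) (LP.expE_sum (φ j)) ν hB)
    (wFun uS uR) (fun μ => f μ - ε) hwm (hfm.sub_const ε) (b := max b (C + ε))
    (fun μ => (hwb μ).trans (le_max_left _ _))
    (fun μ => le_trans (by
      have := abs_le.1 (hfC μ)
      rw [abs_le]; constructor <;> linarith) (le_max_right _ _))
    (by
      intro mubar hmu
      obtain ⟨μ, γ, hγ, hsc, lam0, hl0, hl1, hlam⟩ := h mubar hmu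
      obtain ⟨q, hq, hqv⟩ := LP.transport hwm hb0 hwb hγ hsc (hfC mubar) hl0 hl1
        (fun lam h1 h2 ν hν c' hc' => by
          have h3 := hc'.trans_le (hlam lam h1 h2 ν hν)
          obtain ⟨_, ⟨q, hq, rfl⟩, hlt⟩ :=
            exists_lt_of_lt_csSup ⟨_, Set.mem_image_of_mem _ (LP.dirac_mem ν)⟩ h3
          exact ⟨q, hq, hlt⟩) (half_pos hε)
      obtain ⟨J', hJ'⟩ := LP.near uS uR hS hR hb0 hSb hRb d hd hwm mubar q hq (half_pos hε)
      obtain ⟨j, rfl⟩ := hJ J'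
      refine ⟨j, ?_⟩
      have h4 : f mubar - ε ≤ ∫ μ, wFun uS uR μ ∂(q : Measure (ProbabilityMeasure Θ)) - ε / 2 := by
        linarith
      exact h4.trans hJ')
  have hsub : ∫ ν, (f ν - ε) ∂(p : Measure (ProbabilityMeasure Θ)) =
      ∫ ν, f ν ∂(p : Measure (ProbabilityMeasure Θ)) - ε := by
    rw [integral_sub hfi (integrable_const _)]; simp
  have hfin : ∫ ν, wFun uS uR ν ∂(p' : Measure (ProbabilityMeasure Θ)) ≤ wHat uS uR μ0 :=
    le_csSup (hbdd μ0) (Set.mem_image_of_mem _ hp')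
  linarith
end
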